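/- Let K = ℚ(α) be the number field generated by a root α of the irreducible polynomial x³ − 17279·x² − 17282·x − 1. Then the 2-rank of the class group of K is 6; that is, the dimension over 𝔽₂ of ClassGroup(𝒪_K)/2·ClassGroup(𝒪_K) equals 6 (equivalently, the subgroup of ideal classes of order dividing 2 has cardinality 2⁶). -/

import Mathlib

/-!
The lower bound is algebraic: six ideals whose squares are principal, with generators separated by
quadratic residue symbols that are trivial on all units, have independent classes, so `2 ^ 6`
divides the order of the `2`-torsion. Two fifth powers of ideals and one `169`-th power show in the
same way that `5 ^ 2 * 13 ^ 2` divides the class number.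

The upper bound is analytic: the class number formula expresses `4 * R * h / p` as the residue of
the Dedekind zeta function, which the Euler product bounds by a factor close to `1` times
`‖L(1, χ)‖ ^ 2`, where `χ` is a cubic character of conductor `p`. The units `θ`, `1 + θ`
generate the unit group up to sign, which gives `log (a + 1) ^ 2 ≤ R`, and two summations by parts
together with a Fejér kernel estimate for Gauss sums reduce `L(1, χ)` to an explicit finite sum.
Numerically, `h < 2 ^ 7 * 5 ^ 2 * 13 ^ 2`, which leaves no room for a larger `2`-torsion.
-/

open NumberField Polynomial Module

section ClassGroupTorsion

theorem pow_card_dvd_card_ker_powMonoidHom {G ι : Type*} [CommGroup G] [Fintype ι] {l : ℕ}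
    (hl : l ≠ 0) {c : ι → G} (hc : ∀ i, c i ^ l = 1)
    (hind : ∀ x : ι → ℕ, ∏ i, c i ^ x i = 1 → ∀ i, l ∣ x i) :
    l ^ Fintype.card ι ∣ Nat.card (powMonoidHom l : G →* G).ker := by
  have : NeZero l := ⟨hl⟩
  let f : Multiplicative (ι → ℤ) →* G :=
    { toFun := fun x => ∏ i, c i ^ x.toAdd i
      map_one' := by simp
      map_mul' := fun x y => by simp [zpow_add, Finset.prod_mul_distrib] }
  let g : Multiplicative (ι → ℤ) →* Multiplicative (ι → ZMod l) :=
    ((Int.castAddHom (ZMod l)).compLeft ι).toMultiplicative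
  have hg : Function.Surjective g := fun y =>
    ⟨.ofAdd fun i => (y.toAdd i).cast, Multiplicative.toAdd.injective <| by ext; simp [g]⟩
  have hker : f.ker = g.ker := by
    ext x
    suffices ∏ i, c i ^ x.toAdd i = 1 ↔ ∀ i, (l : ℤ) ∣ x.toAdd i by
      simpa [MonoidHom.mem_ker, f, g, funext_iff, ← ZMod.intCast_zmod_eq_zero_iff_dvd,
        ← toAdd_eq_zero] using this
    refine ⟨fun h i => ?_, fun h => Finset.prod_eq_one fun i _ => ?_⟩
    · have hnat (i : ι) : ((x.toAdd i % l).toNat : ℤ) = x.toAdd i % l :=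
        Int.toNat_of_nonneg (Int.emod_nonneg _ (by exact_mod_cast hl))
      have := hind (fun i => (x.toAdd i % l).toNat) (by
        simp_rw [← h, ← zpow_natCast, hnat, ← zpow_eq_zpow_emod' _ (hc _)]) i
      rw [← Int.natCast_dvd_natCast, hnat] at this
      exact Int.dvd_of_emod_eq_zero (by simpa using Int.emod_eq_zero_of_dvd this)
    · obtain ⟨k, hk⟩ := h i
      rw [hk, zpow_mul, zpow_natCast, hc, one_zpow]
  have hrange : f.range ≤ (powMonoidHom l : G →* G).ker := by
    rintro _ ⟨x, rfl⟩
    change (∏ i, c i ^ x.toAdd i) ^ l = 1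
    simp_rw [← Finset.prod_pow, ← zpow_natCast, zpow_comm, zpow_natCast, hc, one_zpow,
      Finset.prod_const_one]
  calc l ^ Fintype.card ι = Nat.card g.range := by
        rw [MonoidHom.range_eq_top.mpr hg, Subgroup.card_top, Nat.card_congr Multiplicative.toAdd,
          Nat.card_fun, Nat.card_zmod, Nat.card_eq_fintype_card]
    _ = Nat.card f.range := by rw [← Subgroup.index_ker, ← Subgroup.index_ker, hker]
    _ ∣ _ := Subgroup.card_dvd_of_le hrange

variable {O : Type*} [CommRing O] [IsDedekindDomain O]

theorem exists_ideal_pow_eq_span_of_mul_eq_pow {l : ℕ} {g d n : O} (h : g * d = n ^ l)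
    (hgd : IsCoprime g d) : ∃ I : Ideal O, I ^ l = Ideal.span {g} := by
  have hmul : Ideal.span {g} * Ideal.span {d} = Ideal.span {n} ^ l := by
    rw [Ideal.span_singleton_mul_span_singleton, h, Ideal.span_singleton_pow]
  obtain ⟨I, hI⟩ := exists_eq_pow_of_mul_eq_pow_of_coprime
    ((Ideal.isCoprime_span_singleton_iff g d).mpr hgd) hmul
  exact ⟨I, hI.symm⟩

/-- Since the symbols `χ i` kill the units, they may be evaluated on the generator of a principal
product of the `l`-th roots of the ideals `(g j)`. -/
theorem pow_card_dvd_card_ker_powMonoidHom_classGroup {ι : Type*} [Fintype ι] {l : ℕ}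
    (hl : l ≠ 0) {g : ι → O}
    (hg : ∀ i, ∃ I : Ideal O, I ^ l = Ideal.span {g i})
    {F : ι → Type*} [∀ i, Field (F i)] (χ : ∀ i, O →*₀ F i)
    (hχ : ∀ i x, χ i x ≠ 0 → χ i x ^ l = 1) (hunit : ∀ i (u : Oˣ), χ i u = 1)
    (hoff : ∀ i j, j ≠ i → χ i (g j) = 1) (hdiag : ∀ i, orderOf (χ i (g i)) = l) :
    l ^ Fintype.card ι ∣
      Nat.card (powMonoidHom l : ClassGroup O →* ClassGroup O).ker := by
  classical
  have hne (i : ι) : χ i (g i) ≠ 0 := fun h => by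
    have := pow_orderOf_eq_one (χ i (g i))
    rw [hdiag, h, zero_pow hl] at this
    exact zero_ne_one this
  choose I hI using hg
  have hI0 (i : ι) : I i ∈ nonZeroDivisors (Ideal O) := by
    refine mem_nonZeroDivisors_of_ne_zero fun h => hne i ?_
    have hgi : g i = 0 := by simpa [h, hl] using (hI i).symm
    rw [hgi, map_zero]
  let J (i : ι) : nonZeroDivisors (Ideal O) := ⟨I i, hI0 i⟩
  refine pow_card_dvd_card_ker_powMonoidHom hl (c := fun i => ClassGroup.mk0 (J i))
    (fun i => ?_) fun x hx i => ?_
  · rw [← map_pow, ClassGroup.mk0_eq_one_iff]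
    exact ⟨g i, by simp [J, hI]⟩
  obtain ⟨d, hd⟩ : (∏ i, I i ^ x i).IsPrincipal := by
    rw [← Finset.prod_congr rfl fun i _ => map_pow ClassGroup.mk0 (J i) (x i), ← map_prod,
      ClassGroup.mk0_eq_one_iff (∏ i, J i ^ x i).2] at hx
    simpa [J] using hx
  obtain ⟨u, hu⟩ : Associated (∏ i, g i ^ x i) (d ^ l) := by
    rw [← Ideal.span_singleton_eq_span_singleton, ← Ideal.prod_span_singleton,
      ← Ideal.span_singleton_pow, ← Ideal.submodule_span_eq (s := {d}), ← hd, ← Finset.prod_pow]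
    simp_rw [← Ideal.span_singleton_pow, ← hI, ← pow_mul, mul_comm]
  have hval : χ i (g i) ^ x i = χ i d ^ l := by
    have := congrArg (χ i) hu
    simp only [map_mul, map_prod, map_pow, hunit, mul_one] at this
    rwa [Finset.prod_eq_single_of_mem i (Finset.mem_univ i)
      fun j _ hj => by rw [hoff i j hj, one_pow]] at this
  have hd0 : χ i d ≠ 0 := fun h => pow_ne_zero (x i) (hne i) (by rw [hval, h, zero_pow hl])
  rw [hχ i d hd0] at hval
  exact hdiag i ▸ orderOf_dvd_of_pow_eq_one hval

theorem natCard_two_torsion_eq_two_pow {G : Type*} [CommGroup G] [Finite G] {k m : ℕ}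
    (hk : 2 ^ k ∣ Nat.card (powMonoidHom 2 : G →* G).ker) (hm : m ∣ Nat.card G) (hodd : Odd m)
    (hlt : Nat.card G < 2 ^ (k + 1) * m) : Nat.card {c : G // c ^ 2 = 1} = 2 ^ k := by
  have hker : Nat.card {c : G // c ^ 2 = 1} = Nat.card (powMonoidHom 2 : G →* G).ker := rfl
  have hgroup : IsPGroup 2 (powMonoidHom 2 : G →* G).ker :=
    fun c => ⟨1, Subtype.ext c.2⟩
  obtain ⟨j, hj⟩ := IsPGroup.iff_card.mp hgroup
  rw [hj] at hk
  have hdvd : 2 ^ j * m ∣ Nat.card G :=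
    (hodd.coprime_two_left.pow_left j).mul_dvd_of_dvd_of_dvd
      (hj ▸ Subgroup.card_subgroup_dvd_card _) hm
  have hjk : 2 ^ j < 2 ^ (k + 1) :=
    lt_of_mul_lt_mul_right ((Nat.le_of_dvd Nat.card_pos hdvd).trans_lt hlt) m.zero_le
  have hkj : k ≤ j := (Nat.pow_dvd_pow_iff_le_right one_lt_two).mp hk
  rw [hker, hj, le_antisymm (Nat.lt_succ_iff.mp ((Nat.pow_lt_pow_iff_right one_lt_two).mp hjk)) hkj]

end ClassGroupTorsion

section Discriminant

variable {K ι : Type*} [Field K] [NumberField K] [Fintype ι] [DecidableEq ι]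

theorem algebraDiscr_eq_det_toMatrix_sq_mul (b : Basis ι ℤ (𝓞 K)) (v : ι → 𝓞 K) :
    Algebra.discr ℤ v = (b.toMatrix v).det ^ 2 * NumberField.discr K := by
  rw [← NumberField.discr_eq_discr K b, ← Algebra.discr_of_matrix_vecMul]
  congr 1
  ext1 j
  simp only [Matrix.vecMul, dotProduct, Matrix.map_apply]
  rw [← b.sum_toMatrix_smul_self v j]
  exact Finset.sum_congr rfl fun i _ => by rw [Algebra.smul_def, mul_comm]

theorem discr_eq_sq_and_span_eq_top_of_prime (hK : 1 < finrank ℚ K) {p : ℕ} (hp : p.Prime)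
    (b : Basis ι ℤ (𝓞 K)) {v : ι → 𝓞 K} (hv : Algebra.discr ℤ v = p ^ 2) :
    NumberField.discr K = p ^ 2 ∧ Submodule.span ℤ (Set.range v) = ⊤ := by
  have hdet := (algebraDiscr_eq_det_toMatrix_sq_mul b v).symm.trans hv
  set d := (b.toMatrix v).det with hd
  have hdvd : d.natAbs ∣ p := Int.natAbs_dvd_natAbs.mpr <|
    (Int.pow_dvd_pow_iff two_ne_zero).mp ⟨_, hdet.symm⟩
  rcases (Nat.dvd_prime hp).mp hdvd with h1 | hpd
  · have hunit : IsUnit d := Int.isUnit_iff_natAbs_eq.mpr h1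
    refine ⟨by rwa [← Int.natAbs_sq, h1, Nat.cast_one, one_pow, one_mul] at hdet, ?_⟩
    exact ((Basis.is_basis_iff_det b).mpr (by rwa [Basis.det_apply])).2
  · have hp0 : (p : ℤ) ^ 2 ≠ 0 := pow_ne_zero 2 (by exact_mod_cast hp.ne_zero)
    rw [← Int.natAbs_sq, hpd, mul_eq_left₀ hp0] at hdet
    have := abs_discr_gt_two hK
    rw [hdet] at this
    norm_num at this

end Discriminant

section RealEmbeddings

variable {K ι : Type*} [Field K] [NumberField K] [Fintype ι]
  {φ : ι → K →ₐ[ℚ] ℝ} (hφ : Function.Injective φ) (hcard : Fintype.card ι = finrank ℚ K)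

/-- The enumeration of the complex embeddings of a totally real field by a full set of real
embeddings. -/
noncomputable def complexEmbeddingEquiv : ι ≃ (K →ₐ[ℚ] ℂ) :=
  .ofBijective (fun i => (Complex.ofRealAm.restrictScalars ℚ).comp (φ i)) <|
    (Fintype.bijective_iff_injective_and_card _).mpr
      ⟨fun i j hij => hφ <| AlgHom.ext fun x => Complex.ofReal_injective (DFunLike.congr_fun hij x),
        by rw [hcard, AlgHom.card]⟩

theorem complexEmbeddingEquiv_apply (i : ι) (x : K) :
    complexEmbeddingEquiv hφ hcard i x = φ i x := rfl

include hφ hcard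

theorem norm_eq_prod_real_embeddings (x : K) : (Algebra.norm ℚ x : ℝ) = ∏ i, φ i x := by
  have h := Algebra.norm_eq_prod_embeddings ℚ ℂ x
  simp only [← (complexEmbeddingEquiv hφ hcard).prod_comp, complexEmbeddingEquiv_apply,
    eq_ratCast] at h
  exact_mod_cast h

theorem prod_abs_real_embeddings_unit (u : (𝓞 K)ˣ) : ∏ i, |φ i u| = 1 := by
  rw [← Finset.abs_prod, ← norm_eq_prod_real_embeddings hφ hcard]
  exact_mod_cast Units.norm K u

theorem isTotallyReal_of_real_embeddings : IsTotallyReal K := by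
  refine ⟨fun v => ?_⟩
  obtain ⟨i, hi⟩ := (complexEmbeddingEquiv hφ hcard).surjective (v.embedding.toRatAlgHom)
  rw [InfinitePlace.isReal_iff, ComplexEmbedding.isReal_iff]
  ext x
  have hx : v.embedding x = φ i x := (DFunLike.congr_fun hi x).symm
  simp [ComplexEmbedding.conjugate_coe_eq, hx]

omit hφ hcard in
theorem algebraDiscr_powers_eq_prod_sub_sq {n : ℕ} {φ : Fin n → K →ₐ[ℚ] ℝ}
    (hφ : Function.Injective φ) (hcard : Fintype.card (Fin n) = finrank ℚ K) (x : 𝓞 K) :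
    (Algebra.discr ℤ (fun i : Fin n => x ^ (i : ℕ)) : ℝ) =
      (∏ i, ∏ j ∈ Finset.Ioi i, (φ j x - φ i x)) ^ 2 := by
  have hrat : (Algebra.discr ℤ (fun i : Fin n => x ^ (i : ℕ)) : ℚ) =
      Algebra.discr ℚ (fun i : Fin n => (x : K) ^ (i : ℕ)) := by
    rw [Algebra.discr_def, Algebra.discr_def, ← eq_intCast (Int.castRingHom ℚ), RingHom.map_det]
    congr 1
    ext i j
    simp [Algebra.traceMatrix_apply, Algebra.traceForm_apply, Algebra.coe_trace_int]
  have h := Algebra.discr_eq_det_embeddingsMatrixReindex_pow_two ℚ ℂ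
    (fun i : Fin n => (x : K) ^ (i : ℕ)) (complexEmbeddingEquiv hφ hcard)
  have hM : Algebra.embeddingsMatrixReindex ℚ ℂ (fun i : Fin n => (x : K) ^ (i : ℕ))
      (complexEmbeddingEquiv hφ hcard) = (Matrix.vandermonde fun i => (φ i x : ℂ)).transpose := by
    ext i j
    simp [Algebra.embeddingsMatrixReindex, Algebra.embeddingsMatrix_apply,
      complexEmbeddingEquiv_apply, Matrix.vandermonde_apply]
  rw [hM, Matrix.det_transpose, Matrix.det_vandermonde, ← hrat, eq_ratCast] at h
  exact_mod_cast h

end RealEmbeddings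

section SimplestCubic

/-- Shanks' simplest cubic with parameter `a`. -/
noncomputable def simplestCubic (a : ℤ) : ℤ[X] := X ^ 3 - C a * X ^ 2 - C (a + 3) * X - 1

theorem simplestCubic_natDegree (a : ℤ) : (simplestCubic a).natDegree = 3 := by
  unfold simplestCubic; compute_degree!

theorem simplestCubic_monic (a : ℤ) : (simplestCubic a).Monic := by
  unfold simplestCubic; monicity!

theorem aeval_simplestCubic {A : Type*} [CommRing A] (a : ℤ) (x : A) :
    aeval x (simplestCubic a) = x ^ 3 - a * x ^ 2 - (a + 3) * x - 1 := by
  simp [simplestCubic, map_ofNat (aeval x)]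

/-- Whatever the parity of `a`, the reduction modulo `2` has no root. -/
theorem simplestCubic_irreducible (a : ℤ) : Irreducible (simplestCubic a) := by
  have hmonic := simplestCubic_monic a
  have hdeg : ((simplestCubic a).map (Int.castRingHom (ZMod 2))).natDegree = 3 := by
    rw [hmonic.natDegree_map, simplestCubic_natDegree]
  refine hmonic.irreducible_of_irreducible_map (Int.castRingHom (ZMod 2)) _ ?_
  rw [(hmonic.map _).irreducible_iff_roots_eq_zero_of_degree_le_three (by omega) (by omega),
    Multiset.eq_zero_iff_forall_notMem]
  intro x hx
  have hno_root : ∀ b x : ZMod 2, x ^ 3 - b * x ^ 2 - (b + 3) * x - 1 ≠ 0 := by decide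
  apply hno_root a x
  simpa [simplestCubic] using (isRoot_of_mem_roots hx).eq_zero

variable {K : Type*} [Field K] [NumberField K]

/-- The algebraic integer `θ` is a root of the simplest cubic with parameter `a` and generates the
number field. -/
structure IsSimplestCubicGenerator (a : ℤ) (θ : 𝓞 K) : Prop where
  root : θ ^ 3 - a * θ ^ 2 - (a + 3) * θ - 1 = 0
  adjoin_eq_top : Algebra.adjoin ℚ {(θ : K)} = ⊤

theorem exists_isSimplestCubicGenerator {a : ℤ} {α : K}
    (hα : α ^ 3 - a * α ^ 2 - (a + 3) * α - 1 = 0) (hgen : Algebra.adjoin ℚ {α} = ⊤) :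
    ∃ θ : 𝓞 K, IsSimplestCubicGenerator a θ := by
  have hint : IsIntegral ℤ α :=
    ⟨simplestCubic a, simplestCubic_monic a, by rw [← aeval_def, aeval_simplestCubic, hα]⟩
  obtain ⟨θ, rfl⟩ : ∃ θ : 𝓞 K, (θ : K) = α := ⟨⟨α, hint⟩, rfl⟩
  exact ⟨θ, RingOfIntegers.coe_injective (by push_cast; exact hα), hgen⟩

/-- The real embeddings listed along the orbit of the dominant root of the simplest cubic under
`x ↦ -1 / (1 + x)`, which permutes the roots cyclically. -/
structure IsConjugateSystem (a : ℤ) (θ : 𝓞 K) (φ : Fin 3 → K →ₐ[ℚ] ℝ) : Prop where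
  injective : Function.Injective φ
  lt_dominant : (a : ℝ) + 1 < φ 0 θ
  second : φ 1 θ = -1 / (1 + φ 0 θ)
  third : φ 2 θ = -(1 + φ 0 θ) / φ 0 θ

theorem exists_dominant_root_simplestCubic {a : ℤ} (ha : 0 ≤ a) :
    ∃ ρ : ℝ, a + 1 < ρ ∧ ρ ^ 3 - a * ρ ^ 2 - (a + 3) * ρ - 1 = 0 := by
  have ha' : (0 : ℝ) ≤ a := by exact_mod_cast ha
  have hcont : Continuous fun x : ℝ => x ^ 3 - a * x ^ 2 - (a + 3) * x - 1 := by fun_prop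
  obtain ⟨ρ, hρ, hroot⟩ := intermediate_value_Ioo (a := (a : ℝ) + 1) (b := a + 2) (by linarith)
    hcont.continuousOn (show (0 : ℝ) ∈ Set.Ioo _ _ by constructor <;> nlinarith)
  exact ⟨ρ, hρ.1, hroot⟩

namespace IsSimplestCubicGenerator

variable {a : ℤ} {θ : 𝓞 K} (h : IsSimplestCubicGenerator a θ)
include h

theorem minpoly_int : minpoly ℤ θ = simplestCubic a := by
  have hint : IsIntegral ℤ θ := Algebra.IsIntegral.isIntegral θ
  have hdvd : minpoly ℤ θ ∣ simplestCubic a :=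
    minpoly.isIntegrallyClosed_dvd hint (by rw [aeval_simplestCubic, h.root])
  exact eq_of_monic_of_associated (minpoly.monic hint) (simplestCubic_monic a) <|
    (minpoly.prime_of_isIntegrallyClosed hint).irreducible.associated_of_dvd
      (simplestCubic_irreducible a) hdvd

theorem minpoly_rat : minpoly ℚ (θ : K) = (simplestCubic a).map (algebraMap ℤ ℚ) := by
  rw [minpoly.isIntegrallyClosed_eq_field_fractions' ℚ θ.isIntegral_coe,
    RingOfIntegers.minpoly_coe, h.minpoly_int]

theorem finrank_eq : finrank ℚ K = 3 := by
  have hint : IsIntegral ℚ (θ : K) := Algebra.IsIntegral.isIntegral _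
  rw [(PowerBasis.ofAdjoinEqTop hint h.adjoin_eq_top).finrank, PowerBasis.ofAdjoinEqTop_dim,
    h.minpoly_rat, (simplestCubic_monic a).natDegree_map, simplestCubic_natDegree]

theorem exists_algHom {E : Type*} [Field E] [Algebra ℚ E] {r : E}
    (hr : r ^ 3 - a * r ^ 2 - (a + 3) * r - 1 = 0) : ∃ φ : K →ₐ[ℚ] E, φ θ = r := by
  have hint : IsIntegral ℚ (θ : K) := Algebra.IsIntegral.isIntegral _
  let pb := PowerBasis.ofAdjoinEqTop hint h.adjoin_eq_top
  exact ⟨pb.lift r (by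
    rw [PowerBasis.ofAdjoinEqTop_gen, h.minpoly_rat, aeval_map_algebraMap, aeval_simplestCubic,
      hr]),
    pb.lift_gen r _⟩

theorem exists_isConjugateSystem (ha : 0 ≤ a) :
    ∃ φ : Fin 3 → K →ₐ[ℚ] ℝ, IsConjugateSystem a θ φ := by
  obtain ⟨ρ, hρ, hroot⟩ := exists_dominant_root_simplestCubic ha
  have hρ0 : 0 < ρ := lt_trans (by positivity) hρ
  have hroot1 : (-1 / (1 + ρ)) ^ 3 - a * (-1 / (1 + ρ)) ^ 2 - (a + 3) * (-1 / (1 + ρ)) - 1 = 0 := by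
    field_simp
    linear_combination -hroot
  have hroot2 : (-(1 + ρ) / ρ) ^ 3 - a * (-(1 + ρ) / ρ) ^ 2 - (a + 3) * (-(1 + ρ) / ρ) - 1 = 0 := by
    field_simp
    linear_combination hroot
  obtain ⟨φ₀, h₀⟩ := h.exists_algHom hroot
  obtain ⟨φ₁, h₁⟩ := h.exists_algHom hroot1
  obtain ⟨φ₂, h₂⟩ := h.exists_algHom hroot2
  have h01 : -1 / (1 + ρ) < 0 := div_neg_of_neg_of_pos (by norm_num) (by positivity)
  have h12 : -(1 + ρ) / ρ < -1 / (1 + ρ) := by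
    rw [div_lt_div_iff₀ hρ0 (by positivity)]; nlinarith
  have hanti : StrictAnti fun i => ![φ₀, φ₁, φ₂] i θ := by
    rw [Fin.strictAnti_iff_succ_lt, Fin.forall_fin_two]
    exact ⟨by simpa [h₀, h₁] using h01.trans hρ0, by simpa [h₁, h₂] using h12⟩
  exact ⟨![φ₀, φ₁, φ₂], fun i j hij => hanti.injective (DFunLike.congr_fun hij (θ : K)),
    by simpa [h₀], by simp [h₀, h₁], by simp [h₀, h₂]⟩

end IsSimplestCubicGenerator

end SimplestCubic

section SmallUnits

theorem add_mul_add_mul_add_le {x y z B : ℝ} (hy0 : 0 < y) (hz0 : 0 < z) (hy : y ≤ B)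
    (hy' : y⁻¹ ≤ B) (hz : z ≤ B) (hz' : z⁻¹ ≤ B) (h : x * y * z = 1) :
    (y + x) * (z + x) * (z + y) ≤ 4 * B ^ 3 + 2 * B ^ 2 + 2 := by
  have hx : x = y⁻¹ * z⁻¹ := by field_simp; linarith
  calc (y + x) * (z + x) * (z + y)
      = y * y * z + y * z * z + y⁻¹ * z⁻¹ * z⁻¹ + y⁻¹ * y⁻¹ * z⁻¹ + y * z⁻¹ + z * y⁻¹ + 2 := by
        rw [hx]; field_simp; ring
    _ ≤ B * B * B + B * B * B + B * B * B + B * B * B + B * B + B * B + 2 := by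
        have := hy0.le.trans hy
        gcongr
    _ = 4 * B ^ 3 + 2 * B ^ 2 + 2 := by ring

variable {K : Type*} [Field K] [NumberField K]

theorem unit_eq_one_or_neg_one_of_rat {u : (𝓞 K)ˣ} {q : ℚ} (hu : (u : K) = q) :
    u = 1 ∨ u = -1 := by
  have hnorm := Units.norm K u
  rw [hu, ← eq_ratCast (algebraMap ℚ K), Algebra.norm_algebraMap, abs_pow,
    pow_eq_one_iff_of_nonneg (abs_nonneg q) finrank_pos.ne'] at hnorm
  rcases eq_or_eq_neg_of_abs_eq hnorm with rfl | rfl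
  · exact .inl <| Units.ext <| RingOfIntegers.coe_injective <| by simpa using hu
  · exact .inr <| Units.ext <| RingOfIntegers.coe_injective <| by simpa using hu

theorem exists_rat_of_algHom_apply_eq (hK : (finrank ℚ K).Prime) {E : Type*} [Field E]
    [Algebra ℚ E] {φ ψ : K →ₐ[ℚ] E} (hne : φ ≠ ψ) {x : K} (hx : φ x = ψ x) :
    ∃ q : ℚ, x = q := by
  have := IntermediateField.isSimpleOrder_of_finrank_prime ℚ K hK
  have hbot : IntermediateField.adjoin ℚ {x} = ⊥ := by
    refine (eq_bot_or_eq_top _).resolve_right fun htop => hne ?_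
    exact AlgHom.ext_of_adjoin_eq_top (IntermediateField.adjoin_eq_top_iff.mp htop)
      (Set.eqOn_singleton.mpr hx)
  obtain ⟨q, hq⟩ := IntermediateField.mem_bot.mp
    (IntermediateField.adjoin_simple_eq_bot_iff.mp hbot)
  exact ⟨q, by rw [← hq, eq_ratCast]⟩

theorem algebraDiscr_eq_zero_of_abs_lt {ι : Type*} [Fintype ι] [DecidableEq ι]
    (hcard : Fintype.card ι = finrank ℚ K) {v : ι → 𝓞 K}
    (hv : |Algebra.discr ℤ v| < |discr K|) : Algebra.discr ℤ v = 0 := by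
  let b : Basis ι ℤ (𝓞 K) := (finBasisOfFinrankEq ℤ (𝓞 K)
    ((RingOfIntegers.rank K).trans hcard.symm)).reindex (Fintype.equivFin ι).symm
  rw [algebraDiscr_eq_det_toMatrix_sq_mul b] at hv ⊢
  have hdet : |(b.toMatrix v).det ^ 2| < 1 := by
    rw [abs_mul] at hv
    exact lt_of_mul_lt_mul_right (by simpa using hv) (abs_nonneg (discr K))
  rw [Int.abs_lt_one_iff.mp hdet, zero_mul]

theorem algebraDiscr_powers_eq_prod_sub_sq_of_cubic (hK : finrank ℚ K = 3)
    {φ : Fin 3 → K →ₐ[ℚ] ℝ} (hφ : Function.Injective φ) (x : 𝓞 K) :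
    (Algebra.discr ℤ (fun i : Fin 3 => x ^ (i : ℕ)) : ℝ) =
      ((φ 1 x - φ 0 x) * (φ 2 x - φ 0 x) * (φ 2 x - φ 1 x)) ^ 2 := by
  rw [algebraDiscr_powers_eq_prod_sub_sq hφ (by rw [hK, Fintype.card_fin]), Fin.prod_univ_three,
    show Finset.Ioi (0 : Fin 3) = {1, 2} by decide, show Finset.Ioi (1 : Fin 3) = {2} by decide,
    show Finset.Ioi (2 : Fin 3) = ∅ by decide]
  simp

/-- The differences of the conjugates of such a unit multiply to less than `√(discr K)` in absolute
value, which forces the discriminant of `1, u, u²` to vanish. -/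
theorem unit_eq_one_or_neg_one_of_small (hK : finrank ℚ K = 3) {φ : Fin 3 → K →ₐ[ℚ] ℝ}
    (hφ : Function.Injective φ) {B : ℝ} (hB : (4 * B ^ 3 + 2 * B ^ 2 + 2) ^ 2 < |discr K|)
    {u : (𝓞 K)ˣ} (hu : ∀ i, i ≠ 0 → |φ i u| ≤ B ∧ |φ i u|⁻¹ ≤ B) : u = 1 ∨ u = -1 := by
  have hcard : Fintype.card (Fin 3) = finrank ℚ K := by rw [hK, Fintype.card_fin]
  have hpos (i : Fin 3) : 0 < |φ i u| :=
    abs_pos.mpr ((map_ne_zero (φ i)).mpr (Units.coe_ne_zero u))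
  have hprod := prod_abs_real_embeddings_unit hφ hcard u
  rw [Fin.prod_univ_three] at hprod
  have hdiff : |(φ 1 u - φ 0 u) * (φ 2 u - φ 0 u) * (φ 2 u - φ 1 u)| ≤
      4 * B ^ 3 + 2 * B ^ 2 + 2 := calc
    _ ≤ (|φ 1 u| + |φ 0 u|) * (|φ 2 u| + |φ 0 u|) * (|φ 2 u| + |φ 1 u|) := by
      rw [abs_mul, abs_mul]
      gcongr <;> exact abs_sub _ _
    _ ≤ _ := add_mul_add_mul_add_le (hpos 1) (hpos 2) (hu 1 one_ne_zero).1 (hu 1 one_ne_zero).2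
      (hu 2 (by decide)).1 (hu 2 (by decide)).2 hprod
  have hdiscr := algebraDiscr_powers_eq_prod_sub_sq_of_cubic hK hφ (u : 𝓞 K)
  have hzero : Algebra.discr ℤ (fun i : Fin 3 => (u : 𝓞 K) ^ (i : ℕ)) = 0 := by
    refine algebraDiscr_eq_zero_of_abs_lt hcard ?_
    rw [← Int.cast_lt (R := ℝ), Int.cast_abs, Int.cast_abs, hdiscr, abs_sq, ← sq_abs]
    exact (pow_le_pow_left₀ (abs_nonneg _) hdiff 2).trans_lt (by exact_mod_cast hB)
  obtain ⟨i, j, hij, heq⟩ : ∃ i j : Fin 3, i ≠ j ∧ φ i u = φ j u := by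
    have hD := pow_eq_zero_iff two_ne_zero |>.mp (hdiscr.symm.trans (by rw [hzero, Int.cast_zero]))
    simp only [mul_eq_zero, sub_eq_zero] at hD
    rcases hD with (h | h) | h
    exacts [⟨1, 0, by decide, h⟩, ⟨2, 0, by decide, h⟩, ⟨2, 1, by decide, h⟩]
  obtain ⟨q, hq⟩ := exists_rat_of_algHom_apply_eq (hK ▸ Nat.prime_three) (hφ.ne hij) heq
  exact unit_eq_one_or_neg_one_of_rat hq

end SmallUnits

section MaximalOrder

variable {K : Type*} [Field K] [NumberField K] {a : ℤ} {θ : 𝓞 K}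

theorem IsSimplestCubicGenerator.map_root (h : IsSimplestCubicGenerator a θ) {R : Type*}
    [CommRing R] [Algebra ℚ R] (φ : K →ₐ[ℚ] R) :
    φ θ ^ 3 - a * φ θ ^ 2 - (a + 3) * φ θ - 1 = 0 := by
  simpa [map_ofNat (algebraMap (𝓞 K) K), map_ofNat φ] using congrArg (fun x : 𝓞 K => φ x) h.root

namespace IsSimplestCubicGenerator

variable (h : IsSimplestCubicGenerator a θ) (ha : 0 ≤ a) {p : ℕ} (hp : p.Prime)
  (hpa : (p : ℤ) = a ^ 2 + 3 * a + 9)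
include h ha

theorem algebraDiscr_powers :
    Algebra.discr ℤ (fun i : Fin 3 => θ ^ (i : ℕ)) = (a ^ 2 + 3 * a + 9) ^ 2 := by
  obtain ⟨φ, hφ⟩ := h.exists_isConjugateSystem ha
  have hroot := h.map_root (φ 0)
  have hρ : 0 < φ 0 θ := lt_trans (by positivity) hφ.lt_dominant
  have hprod : (φ 1 θ - φ 0 θ) * (φ 2 θ - φ 0 θ) * (φ 2 θ - φ 1 θ) =
      -((a : ℝ) ^ 2 + 3 * a + 9) := by
    have haρ : (a : ℝ) = (φ 0 θ ^ 3 - 3 * φ 0 θ - 1) / (φ 0 θ * (φ 0 θ + 1)) := by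
      field_simp
      linear_combination -hroot
    rw [hφ.second, hφ.third, haρ]
    field_simp
    ring
  have hdiscr := algebraDiscr_powers_eq_prod_sub_sq_of_cubic h.finrank_eq hφ.injective θ
  rw [hprod, neg_sq] at hdiscr
  exact_mod_cast hdiscr

include hp hpa

theorem discr_eq : discr K = p ^ 2 :=
  (discr_eq_sq_and_span_eq_top_of_prime (by rw [h.finrank_eq]; norm_num) hp
    (finBasisOfFinrankEq ℤ (𝓞 K) ((RingOfIntegers.rank K).trans h.finrank_eq))
    (by rw [h.algebraDiscr_powers ha, hpa])).1

theorem adjoin_int_eq_top : Algebra.adjoin ℤ {θ} = ⊤ := by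
  have hspan := (discr_eq_sq_and_span_eq_top_of_prime (by rw [h.finrank_eq]; norm_num) hp
    (finBasisOfFinrankEq ℤ (𝓞 K) ((RingOfIntegers.rank K).trans h.finrank_eq))
    (v := fun i : Fin 3 => θ ^ (i : ℕ)) (by rw [h.algebraDiscr_powers ha, hpa])).2
  rw [← Algebra.toSubmodule_eq_top, eq_top_iff, ← hspan, Submodule.span_le]
  rintro _ ⟨i, rfl⟩
  exact pow_mem (Algebra.self_mem_adjoin_singleton ℤ θ) _

theorem exists_ringHom {R : Type*} [CommRing R] {r : R}
    (hr : r ^ 3 - a * r ^ 2 - (a + 3) * r - 1 = 0) : ∃ ψ : 𝓞 K →+* R, ψ θ = r := by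
  have hint : IsIntegral ℤ θ := Algebra.IsIntegral.isIntegral θ
  let pb := PowerBasis.ofAdjoinEqTop' hint (h.adjoin_int_eq_top ha hp hpa)
  have hgen : pb.gen = θ := PowerBasis.ofAdjoinEqTop'_gen _ _
  have hroot : aeval r (minpoly ℤ pb.gen) = 0 := by
    rw [hgen, h.minpoly_int, aeval_simplestCubic, hr]
  exact ⟨pb.lift r hroot, hgen ▸ pb.lift_gen r hroot⟩

end IsSimplestCubicGenerator

end MaximalOrder

section UnitGroup

variable {K : Type*} [Field K] [NumberField K] {a : ℤ} {θ : 𝓞 K}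

namespace IsSimplestCubicGenerator

variable (h : IsSimplestCubicGenerator a θ)

/-- The root `θ` as a unit. -/
def unit : (𝓞 K)ˣ where
  val := θ
  inv := θ ^ 2 - a * θ - (a + 3)
  val_inv := by linear_combination h.root
  inv_val := by linear_combination h.root

/-- The unit `1 + θ`, which is minus the inverse of a conjugate of `θ`. -/
def unitAddOne : (𝓞 K)ˣ where
  val := θ + 1
  inv := -(θ ^ 2 - (a + 1) * θ - 2)
  val_inv := by linear_combination -h.root
  inv_val := by linear_combination -h.root

theorem coe_unit : (h.unit : 𝓞 K) = θ := rfl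

theorem coe_unitAddOne : (h.unitAddOne : 𝓞 K) = θ + 1 := rfl

end IsSimplestCubicGenerator

namespace IsConjugateSystem

variable {φ : Fin 3 → K →ₐ[ℚ] ℝ} (hφ : IsConjugateSystem a θ φ) (ha : 0 ≤ a)
include hφ ha

theorem one_lt_dominant : 1 < φ 0 θ := by
  have : (0 : ℝ) ≤ a := by exact_mod_cast ha
  linarith [hφ.lt_dominant]

theorem log_abs_second : Real.log |φ 1 θ| = -Real.log (1 + φ 0 θ) := by
  have := hφ.one_lt_dominant ha
  rw [hφ.second, abs_div, abs_neg, abs_one, abs_of_pos (by linarith), one_div, Real.log_inv]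

theorem log_abs_second_add_one :
    Real.log |φ 1 θ + 1| = Real.log (φ 0 θ) - Real.log (1 + φ 0 θ) := by
  have := hφ.one_lt_dominant ha
  have hval : φ 1 θ + 1 = φ 0 θ / (1 + φ 0 θ) := by
    rw [hφ.second]; field_simp; ring
  rw [hval, abs_of_pos (by positivity), Real.log_div (by positivity) (by positivity)]

theorem log_abs_third : Real.log |φ 2 θ| = Real.log (1 + φ 0 θ) - Real.log (φ 0 θ) := by
  have := hφ.one_lt_dominant ha
  rw [hφ.third, abs_div, abs_neg, abs_of_pos (by positivity), abs_of_pos (by positivity),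
    Real.log_div (by positivity) (by positivity)]

theorem log_abs_third_add_one : Real.log |φ 2 θ + 1| = -Real.log (φ 0 θ) := by
  have := hφ.one_lt_dominant ha
  have hval : φ 2 θ + 1 = -(φ 0 θ)⁻¹ := by
    rw [hφ.third]; field_simp; ring
  rw [hval, abs_neg, abs_of_pos (by positivity), Real.log_inv]

theorem log_dominant_le : Real.log (φ 0 θ) ≤ Real.log (1 + φ 0 θ) :=
  Real.log_le_log (zero_lt_one.trans (hφ.one_lt_dominant ha)) (by linarith)

theorem half_row_sum_second_le : (|(Real.log |φ 1 θ|)| + |(Real.log |φ 1 θ + 1|)|) / 2 ≤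
    Real.log (1 + φ 0 θ) - Real.log (φ 0 θ) / 2 := by
  have hB := Real.log_pos (hφ.one_lt_dominant ha)
  have hAB := hφ.log_dominant_le ha
  rw [hφ.log_abs_second ha, hφ.log_abs_second_add_one ha, abs_neg, abs_of_pos (hB.trans_le hAB),
    abs_of_nonpos (sub_nonpos.mpr hAB)]
  linarith

theorem half_row_sum_third_le : (|(Real.log |φ 2 θ|)| + |(Real.log |φ 2 θ + 1|)|) / 2 ≤
    Real.log (1 + φ 0 θ) - Real.log (φ 0 θ) / 2 := by
  have hB := Real.log_pos (hφ.one_lt_dominant ha)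
  have hAB := hφ.log_dominant_le ha
  rw [hφ.log_abs_third ha, hφ.log_abs_third_add_one ha, abs_neg, abs_of_pos hB,
    abs_of_nonneg (sub_nonneg.mpr hAB)]
  linarith

theorem regulator_det_pos : 0 <
    Real.log |φ 1 θ| * Real.log |φ 2 θ + 1| - Real.log |φ 1 θ + 1| * Real.log |φ 2 θ| := by
  have := Real.log_pos (hφ.one_lt_dominant ha)
  rw [hφ.log_abs_second ha, hφ.log_abs_second_add_one ha, hφ.log_abs_third ha,
    hφ.log_abs_third_add_one ha]
  nlinarith [sq_nonneg (2 * Real.log (1 + φ 0 θ) - Real.log (φ 0 θ))]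

end IsConjugateSystem

/-- Round the real solution of the linear system. -/
theorem exists_int_combination_close {a b c d : ℝ} (hdet : a * d - b * c ≠ 0) (x y : ℝ) :
    ∃ i j : ℤ, |x - (i * a + j * b)| ≤ (|a| + |b|) / 2 ∧
      |y - (i * c + j * d)| ≤ (|c| + |d|) / 2 := by
  obtain ⟨s, hs⟩ : ∃ s, s * (a * d - b * c) = x * d - y * b := ⟨_, div_mul_cancel₀ _ hdet⟩
  obtain ⟨t, ht⟩ : ∃ t, t * (a * d - b * c) = a * y - c * x := ⟨_, div_mul_cancel₀ _ hdet⟩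
  have hx : x = s * a + t * b := mul_right_cancel₀ hdet (by linear_combination -a * hs - b * ht)
  have hy : y = s * c + t * d := mul_right_cancel₀ hdet (by linear_combination -c * hs - d * ht)
  have hround (e f : ℝ) :
      |s * e + t * f - (round s * e + round t * f)| ≤ (|e| + |f|) / 2 := calc
    _ = |(s - round s) * e + (t - round t) * f| := by ring_nf
    _ ≤ |s - round s| * |e| + |t - round t| * |f| := by
      rw [← abs_mul, ← abs_mul]; exact abs_add_le _ _
    _ ≤ 1 / 2 * |e| + 1 / 2 * |f| := by gcongr <;> exact abs_sub_round _
    _ = (|e| + |f|) / 2 := by ring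
  exact ⟨round s, round t, hx ▸ hround a b, hy ▸ hround c d⟩

theorem log_abs_unit_div (φ : K →ₐ[ℚ] ℝ) (u v w : (𝓞 K)ˣ) (i j : ℤ) :
    Real.log |φ (u / (v ^ i * w ^ j) : (𝓞 K)ˣ)| =
      Real.log |φ u| - (i * Real.log |φ v| + j * Real.log |φ w|) := by
  have hne (x : (𝓞 K)ˣ) : φ x ≠ 0 := (_root_.map_ne_zero φ).mpr (Units.coe_ne_zero x)
  simp only [Real.log_abs, div_eq_mul_inv, mul_inv, ← zpow_neg, Units.coe_mul, Units.coe_zpow,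
    map_mul, map_zpow₀]
  rw [Real.log_mul (hne u) (mul_ne_zero (zpow_ne_zero _ (hne v)) (zpow_ne_zero _ (hne w))),
    Real.log_mul (zpow_ne_zero _ (hne v)) (zpow_ne_zero _ (hne w)), Real.log_zpow, Real.log_zpow]
  push_cast
  ring

theorem abs_and_inv_le_of_abs_log_le {x c d : ℝ} (hx : x ≠ 0) (hlog : |(Real.log |x|)| ≤ d)
    (hd : d ≤ c) : |x| ≤ Real.exp c ∧ |x|⁻¹ ≤ Real.exp c := by
  have hlog' := abs_le.mp (hlog.trans hd)
  have hpos := abs_pos.mpr hx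
  rw [← Real.log_le_iff_le_exp hpos, ← Real.log_le_iff_le_exp (inv_pos.mpr hpos), Real.log_inv]
  exact ⟨hlog'.2, by linarith⟩

namespace IsSimplestCubicGenerator

variable (h : IsSimplestCubicGenerator a θ)
include h

theorem dominant_lt (ha : 0 ≤ a) (φ : K →ₐ[ℚ] ℝ) : φ θ < a + 2 := by
  have ha' : (0 : ℝ) ≤ a := by exact_mod_cast ha
  by_contra! hge
  nlinarith [h.map_root φ, mul_nonneg (sq_nonneg (φ θ)) (sub_nonneg.mpr hge),
    mul_nonneg (show 0 ≤ φ θ by linarith) (sub_nonneg.mpr hge)]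

theorem covering_radius_lt (ha : 32 ≤ a) {φ : Fin 3 → K →ₐ[ℚ] ℝ} (hφ : IsConjugateSystem a θ φ)
    {c : ℝ} (hc : c = Real.exp (Real.log (1 + φ 0 θ) - Real.log (φ 0 θ) / 2)) :
    4 * c ^ 3 + 2 * c ^ 2 + 2 < (a : ℝ) ^ 2 + 3 * a + 9 := by
  have ha' : (32 : ℝ) ≤ a := by exact_mod_cast ha
  have hρ := hφ.lt_dominant
  have hρ' := h.dominant_lt (by linarith) (φ 0)
  have hc2 : c ^ 2 ≤ (a : ℝ) + 5 := calc
    c ^ 2 = (1 + φ 0 θ) ^ 2 / φ 0 θ := by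
      rw [hc, ← Real.exp_nat_mul, Nat.cast_two, mul_sub, mul_div_cancel₀ _ two_ne_zero,
        Real.exp_sub, Real.exp_log (by linarith), two_mul, Real.exp_add,
        Real.exp_log (by linarith), sq]
    _ ≤ (a : ℝ) + 5 := by rw [div_le_iff₀ (by linarith)]; nlinarith
  have hc0 : 0 < c := hc ▸ Real.exp_pos _
  obtain ⟨s, hs0, hs⟩ : ∃ s : ℝ, 0 ≤ s ∧ s ^ 2 = a + 5 :=
    ⟨√(a + 5), Real.sqrt_nonneg _, Real.sq_sqrt (by linarith)⟩
  have hcs : c ≤ s := abs_le_of_sq_le_sq' (by rw [hs]; exact hc2) hs0 |>.2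
  have hs6 : 6 ≤ s := by nlinarith
  have ha_eq : (a : ℝ) = s ^ 2 - 5 := by linarith
  calc 4 * c ^ 3 + 2 * c ^ 2 + 2 ≤ 4 * s ^ 3 + 2 * s ^ 2 + 2 := by gcongr
    _ < (a : ℝ) ^ 2 + 3 * a + 9 := by
      rw [ha_eq]
      nlinarith [mul_nonneg (sq_nonneg s) (show 0 ≤ s ^ 2 - 4 * s - 9 by nlinarith)]

/-- The quotient of a unit by the nearest product of powers of `θ` and `1 + θ` is too small to be
different from `±1`. -/
theorem unit_eq_or_eq_neg (ha : 32 ≤ a) {p : ℕ} (hp : p.Prime) (hpa : (p : ℤ) = a ^ 2 + 3 * a + 9)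
    (u : (𝓞 K)ˣ) : ∃ i j : ℤ, u = h.unit ^ i * h.unitAddOne ^ j ∨
      u = -(h.unit ^ i * h.unitAddOne ^ j) := by
  have ha0 : 0 ≤ a := by linarith
  obtain ⟨φ, hφ⟩ := h.exists_isConjugateSystem ha0
  obtain ⟨i, j, hi, hj⟩ := exists_int_combination_close (hφ.regulator_det_pos ha0).ne'
    (Real.log |φ 1 u|) (Real.log |φ 2 u|)
  set v := u / (h.unit ^ i * h.unitAddOne ^ j) with hv
  have hlog (k : Fin 3) : Real.log |φ k v| =
      Real.log |φ k u| - (i * Real.log |φ k θ| + j * Real.log |φ k θ + 1|) := by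
    have hone : (h.unitAddOne : K) = θ + 1 := by rw [h.coe_unitAddOne, map_add, map_one]
    rw [hv, log_abs_unit_div, h.coe_unit, hone, map_add, map_one]
  rw [← hlog] at hi hj
  have hv0 (k : Fin 3) : φ k v ≠ 0 := (_root_.map_ne_zero _).mpr (Units.coe_ne_zero v)
  have hsmall : v = 1 ∨ v = -1 := by
    refine unit_eq_one_or_neg_one_of_small h.finrank_eq hφ.injective
      (B := Real.exp (Real.log (1 + φ 0 θ) - Real.log (φ 0 θ) / 2)) ?_ fun k hk => ?_
    · have hlt := h.covering_radius_lt ha hφ rfl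
      have hpR : (p : ℝ) = a ^ 2 + 3 * a + 9 := by exact_mod_cast hpa
      rw [h.discr_eq ha0 hp hpa, abs_of_nonneg (by positivity)]
      push_cast
      rw [hpR]
      gcongr
    · fin_cases k
      · exact absurd rfl hk
      · exact abs_and_inv_le_of_abs_log_le (hv0 1) hi (hφ.half_row_sum_second_le ha0)
      · exact abs_and_inv_le_of_abs_log_le (hv0 2) hj (hφ.half_row_sum_third_le ha0)
  refine ⟨i, j, hsmall.imp (fun h1 => ?_) fun h1 => ?_⟩
  · exact div_eq_one.mp (hv ▸ h1)
  · rw [← div_mul_cancel u (h.unit ^ i * h.unitAddOne ^ j), ← hv, h1, neg_one_mul]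

end IsSimplestCubicGenerator

end UnitGroup

section ResidueSymbols

/-- An element `x + y θ + z θ²`, an integer `n` a power of which is to be its norm, and a prime `q`
with a class `r` modulo `q`, the image of `θ`, at which its power residue symbol is evaluated. -/
structure ResidueDatum where
  x : ℤ
  y : ℤ
  z : ℤ
  n : ℤ
  q : ℕ
  r : ℕ

namespace ResidueDatum

variable (D D' : ResidueDatum)

/-- The polynomial `x + y t + z t²`, with `t` in the place of `θ`. -/
def eval {A : Type*} [CommRing A] (t : A) : A := D.x + D.y * t + D.z * t ^ 2

theorem map_eval {A B : Type*} [CommRing A] [CommRing B] (ψ : A →+* B) (t : A) :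
    ψ (D.eval t) = D.eval (ψ t) := by
  simp [eval]

/-- The trace of `x + y θ + z θ²` for a root `θ` of the simplest cubic. -/
def trace (a : ℤ) : ℤ := 3 * D.x + a * D.y + (a ^ 2 + 2 * a + 6) * D.z

/-- The second elementary symmetric function of the conjugates of `x + y θ + z θ²`. -/
def quadraticTrace (a : ℤ) : ℤ :=
  3 * D.x ^ 2 + 2 * a * D.x * D.y + (2 * a ^ 2 + 4 * a + 12) * D.x * D.z - (a + 3) * D.y ^ 2 -
    (a ^ 2 + 3 * a + 3) * D.y * D.z + (a ^ 2 + 4 * a + 9) * D.z ^ 2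

/-- The norm of `x + y θ + z θ²`. -/
def norm (a : ℤ) : ℤ :=
  D.x ^ 3 + a * D.x ^ 2 * D.y + (a ^ 2 + 2 * a + 6) * D.x ^ 2 * D.z - (a + 3) * D.x * D.y ^ 2 -
    (a ^ 2 + 3 * a + 3) * D.x * D.y * D.z + (a ^ 2 + 4 * a + 9) * D.x * D.z ^ 2 + D.y ^ 3 +
    a * D.y ^ 2 * D.z - (a + 3) * D.y * D.z ^ 2 + D.z ^ 3

theorem eval_mul_cofactor_eq_norm {A : Type*} [CommRing A] {a : ℤ} {t : A}
    (ht : t ^ 3 - a * t ^ 2 - (a + 3) * t - 1 = 0) :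
    D.eval t * (D.eval t * (D.eval t - D.trace a) + D.quadraticTrace a) = D.norm a := by
  simp only [eval, trace, quadraticTrace, norm]
  push_cast
  linear_combination (D.z ^ 3 * t ^ 3 + (3 * D.y * D.z ^ 2 + a * D.z ^ 3) * t ^ 2 +
    (3 * D.y ^ 2 * D.z + 2 * a * D.y * D.z ^ 2 - (a + 3) * D.z ^ 3) * t + D.y ^ 3 +
    a * D.y ^ 2 * D.z - (a + 3) * D.y * D.z ^ 2 + D.z ^ 3) * ht

theorem exists_ideal_pow_eq_span_eval {A : Type*} [CommRing A] [IsDedekindDomain A] {a : ℤ} {t : A}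
    (ht : t ^ 3 - a * t ^ 2 - (a + 3) * t - 1 = 0) {l : ℕ}
    (hnorm : D.norm a = D.n ^ l) (hcop : IsCoprime (D.quadraticTrace a) D.n) :
    ∃ I : Ideal A, I ^ l = Ideal.span {D.eval t} := by
  have hmul := D.eval_mul_cofactor_eq_norm ht
  rw [hnorm, Int.cast_pow] at hmul
  refine exists_ideal_pow_eq_span_of_mul_eq_pow hmul ?_
  have hdvd : D.eval t ∣ (D.n : A) ^ l := Dvd.intro _ hmul
  have hpow : IsCoprime (D.eval t) (D.quadraticTrace a : A) :=
    ((hcop.intCast (R := A)).symm.pow_left (m := l)).of_isCoprime_of_dvd_left hdvd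
  simpa [add_comm] using hpow.add_mul_left_right (D.eval t - D.trace a)

/-- The least residue of the value of `D'` at the prime of `D`. -/
def residue : ℕ := ((D'.x + D'.y * D.r + D'.z * D.r ^ 2) % D.q).toNat

theorem natCast_residue (hq : 0 < D.q) : (D.residue D' : ZMod D.q) = D'.eval (D.r : ZMod D.q) := by
  have hnonneg : 0 ≤ (D'.x + D'.y * D.r + D'.z * D.r ^ 2) % (D.q : ℤ) :=
    Int.emod_nonneg _ (by exact_mod_cast hq.ne')
  rw [residue, ← Int.cast_natCast, Int.toNat_of_nonneg hnonneg, ZMod.intCast_mod]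
  simp [eval]

/-- The map `θ ↦ r` to `ZMod q` is the reduction at a prime of degree one, at which `-1`, `θ` and
`1 + θ` are `l`-th power residues. These three generate the units. -/
structure KillsUnits (a : ℤ) (l : ℕ) : Prop where
  prime : D.q.Prime
  dvd : l ∣ D.q - 1
  root : ((D.r : ℤ) ^ 3 - a * D.r ^ 2 - (a + 3) * D.r - 1) % D.q = 0
  neg_one : (D.q - 1) ^ ((D.q - 1) / l) % D.q = 1
  unit : D.r ^ ((D.q - 1) / l) % D.q = 1
  unit_add_one : (D.r + 1) ^ ((D.q - 1) / l) % D.q = 1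

end ResidueDatum

theorem natCast_pow_eq_one_iff {q : ℕ} (hq : 1 < q) (b e : ℕ) :
    (b : ZMod q) ^ e = 1 ↔ b ^ e % q = 1 := by
  rw [← Nat.cast_pow, ← Nat.cast_one, ZMod.natCast_eq_natCast_iff', Nat.mod_eq_of_lt hq]

variable {K : Type*} [Field K] [NumberField K] {a : ℤ} {θ : 𝓞 K}

theorem IsSimplestCubicGenerator.map_unit_eq_one (h : IsSimplestCubicGenerator a θ) (ha : 32 ≤ a)
    {p : ℕ} (hp : p.Prime) (hpa : (p : ℤ) = a ^ 2 + 3 * a + 9) {M : Type*} [MonoidWithZero M]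
    {χ : 𝓞 K →*₀ M} (hneg : χ (-1) = 1) (hθ : χ θ = 1) (hθ1 : χ (θ + 1) = 1) (u : (𝓞 K)ˣ) :
    χ u = 1 := by
  let f : (𝓞 K)ˣ →* Mˣ := Units.map (χ : 𝓞 K →* M)
  have hf1 : f (-1) = 1 := Units.ext hneg
  have hf2 : f h.unit = 1 := Units.ext hθ
  have hf3 : f h.unitAddOne = 1 := Units.ext hθ1
  suffices f u = 1 from congrArg Units.val this
  obtain ⟨i, j, rfl | rfl⟩ := h.unit_eq_or_eq_neg ha hp hpa u
  · simp [hf2, hf3]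
  · rw [neg_eq_neg_one_mul, map_mul, hf1]
    simp [hf2, hf3]

theorem IsSimplestCubicGenerator.exists_powerResidueSymbol (h : IsSimplestCubicGenerator a θ)
    (ha : 32 ≤ a) {p : ℕ} (hp : p.Prime) (hpa : (p : ℤ) = a ^ 2 + 3 * a + 9) {l : ℕ}
    {D : ResidueDatum} (hD : D.KillsUnits a l) :
    ∃ χ : 𝓞 K →*₀ ZMod D.q, (∀ x, χ x ≠ 0 → χ x ^ l = 1) ∧ (∀ u : (𝓞 K)ˣ, χ u = 1) ∧
      ∀ D' : ResidueDatum, χ (D'.eval θ) = (D.residue D' : ZMod D.q) ^ ((D.q - 1) / l) := by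
  have : Fact D.q.Prime := ⟨hD.prime⟩
  have hq := hD.prime.one_lt
  have hroot : (D.r : ZMod D.q) ^ 3 - a * D.r ^ 2 - (a + 3) * D.r - 1 = 0 := by
    exact_mod_cast (ZMod.intCast_zmod_eq_zero_iff_dvd _ _).mpr (Int.dvd_of_emod_eq_zero hD.root)
  obtain ⟨ψ, hψ⟩ := h.exists_ringHom (by linarith) hp hpa hroot
  have he : (D.q - 1) / l ≠ 0 := by
    intro h0
    have := Nat.div_mul_cancel hD.dvd
    rw [h0] at this
    omega
  let χ : 𝓞 K →*₀ ZMod D.q := (powMonoidWithZeroHom he).comp ψ.toMonoidWithZeroHom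
  have hχ (x : 𝓞 K) : χ x = ψ x ^ ((D.q - 1) / l) := rfl
  refine ⟨χ, fun x hx => ?_, h.map_unit_eq_one ha hp hpa ?_ ?_ ?_, fun D' => ?_⟩
  · rw [hχ, ← pow_mul, Nat.div_mul_cancel hD.dvd]
    exact ZMod.pow_card_sub_one_eq_one fun h0 => hx (by rw [hχ, h0, zero_pow he])
  · have hcast : (-1 : ZMod D.q) = (D.q - 1 : ℕ) := by simp [Nat.cast_sub hq.le]
    rw [hχ, map_neg, map_one, hcast, natCast_pow_eq_one_iff hq, hD.neg_one]
  · rw [hχ, hψ, natCast_pow_eq_one_iff hq, hD.unit]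
  · rw [hχ, map_add, map_one, hψ, ← Nat.cast_succ, natCast_pow_eq_one_iff hq]
    exact hD.unit_add_one
  · rw [hχ, D'.map_eval, hψ, D.natCast_residue D' hD.prime.pos]

theorem IsSimplestCubicGenerator.prime_pow_card_dvd_card_ker_powMonoidHom
    (h : IsSimplestCubicGenerator a θ) (ha : 32 ≤ a) {p : ℕ} (hp : p.Prime)
    (hpa : (p : ℤ) = a ^ 2 + 3 * a + 9) {ℓ k : ℕ} (hℓ : ℓ.Prime) {ι : Type*} [Fintype ι]
    (D : ι → ResidueDatum) (hnorm : ∀ i, (D i).norm a = (D i).n ^ ℓ ^ (k + 1))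
    (hcop : ∀ i, IsCoprime ((D i).quadraticTrace a) (D i).n)
    (hunits : ∀ i, (D i).KillsUnits a (ℓ ^ (k + 1)))
    (hoff : ∀ i j, j ≠ i →
      (D i).residue (D j) ^ (((D i).q - 1) / ℓ ^ (k + 1)) % (D i).q = 1)
    (hdiag : ∀ i,
      1 < (D i).residue (D i) ^ (((D i).q - 1) / ℓ ^ (k + 1) * ℓ ^ k) % (D i).q) :
    (ℓ ^ (k + 1)) ^ Fintype.card ι ∣
      Nat.card (powMonoidHom (ℓ ^ (k + 1)) : ClassGroup (𝓞 K) →* ClassGroup (𝓞 K)).ker := by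
  have : Fact ℓ.Prime := ⟨hℓ⟩
  have (i : ι) : Fact (D i).q.Prime := ⟨(hunits i).prime⟩
  have hq (i : ι) := (hunits i).prime.one_lt
  choose χ hχl hχu hχ using fun i => h.exists_powerResidueSymbol ha hp hpa (hunits i)
  refine pow_card_dvd_card_ker_powMonoidHom_classGroup (pow_ne_zero _ hℓ.ne_zero)
    (fun i => (D i).exists_ideal_pow_eq_span_eval h.root (hnorm i) (hcop i)) χ hχl hχu
    (fun i j hij => ?_) fun i => ?_
  · rw [hχ, natCast_pow_eq_one_iff (hq i), hoff i j hij]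
  · have hpow : χ i ((D i).eval θ) ^ ℓ ^ k =
        (((D i).residue (D i) ^ (((D i).q - 1) / ℓ ^ (k + 1) * ℓ ^ k) % (D i).q : ℕ) :
          ZMod (D i).q) := by
      rw [hχ, ZMod.natCast_mod, Nat.cast_pow, pow_mul]
    refine orderOf_eq_prime_pow (fun h1 => ?_) (hχl i _ fun h0 => ?_)
    · rw [hχ, ← pow_mul, natCast_pow_eq_one_iff (hq i)] at h1
      exact (hdiag i).ne' h1
    · rw [h0, zero_pow (pow_ne_zero _ hℓ.ne_zero), eq_comm, ZMod.natCast_eq_zero_iff] at hpow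
      have := Nat.le_of_dvd (by linarith [hdiag i]) hpow
      exact absurd (Nat.mod_lt _ (zero_lt_one.trans (hq i))) this.not_gt

end ResidueSymbols

section Certificates

theorem prime_298615687 : Nat.Prime 298615687 := by
  have hq : Nat.Prime 49769281 := by norm_num
  refine lucas_primality _ (3 : ZMod 298615687) (by reduce_mod_char) fun q hprime hdvd => ?_
  have hcases : q = 2 ∨ q = 3 ∨ q = 49769281 := by
    rw [show 298615687 - 1 = 2 * (3 * 49769281) by norm_num, hprime.dvd_mul, hprime.dvd_mul,
      Nat.prime_dvd_prime_iff_eq hprime Nat.prime_two,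
      Nat.prime_dvd_prime_iff_eq hprime Nat.prime_three,
      Nat.prime_dvd_prime_iff_eq hprime hq] at hdvd
    exact hdvd
  rcases hcases with rfl | rfl | rfl <;> norm_num <;> reduce_mod_char <;> decide

/-- Six elements whose ideals are squares, each detected by a quadratic residue symbol. -/
def squareData : Fin 6 → ResidueDatum :=
  ![⟨-25, 1, 0, 3349, 3797, 559⟩,
    ⟨-1, -26, 0, 3349, 3797, 359⟩,
    ⟨34, 33, 0, 4399, 5333, 5150⟩,
    ⟨-33, 1, 0, 4399, 5333, 203⟩,
    ⟨-1, 85, 0, 11267, 8821, 1790⟩,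
    ⟨-85, -86, 0, 11267, 8821, 546⟩]

/-- Two elements whose ideals are fifth powers, each detected by a quintic residue symbol. -/
def fifthPowerData : Fin 2 → ResidueDatum :=
  ![⟨-14330, 11379055, -427, 25967, 4591, 209⟩,
    ⟨-4000495, -4015679, -427, 25967, 4591, 3931⟩]

/-- An element whose ideal is the 169th power of an ideal whose class has order 169. -/
def power169Datum : ResidueDatum where
  x := -26886708146654998216370923860882506222282641757938966800838729599906737042761126884040134485452948379396518350420796490896163794684883406662079546628782129856689890439915618381617555081766521841921177738437880728170625782417497749558034961872111944518916302618974
  y := -192656636839985982747803897806364537621032451544684728328699005812429115878188427268291674614638254142666207982794190169766957404311334231778288017483152155176893744106608011009125135642747958196396032647326368391119673617486581746960758136477853584824730163307413275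
  z := 7097200910749800870925497506207989193873589477741452489981624105652944975277354834597891700059342772991107492656447283515807345885973139014787465570006006239130198223190860532364669174662149977753212709784246907950487555712406750317359667503625439844500484201823
  n := 53117
  q := 11543039
  r := 4414866

variable {K : Type*} [Field K] [NumberField K] {θ : 𝓞 K}
  (h : IsSimplestCubicGenerator 17279 θ)
include h

theorem two_pow_six_dvd_card_ker :
    2 ^ 6 ∣ Nat.card (powMonoidHom 2 : ClassGroup (𝓞 K) →* ClassGroup (𝓞 K)).ker := by
  refine h.prime_pow_card_dvd_card_ker_powMonoidHom (k := 0) (by norm_num) prime_298615687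
    (by norm_num) Nat.prime_two squareData (by decide +kernel) (fun i => ?_)
    (fun i => ⟨?_, ?_, ?_, ?_, ?_, ?_⟩) (by decide +kernel) (by decide +kernel)
  · rw [Int.isCoprime_iff_gcd_eq_one]
    revert i; decide +kernel
  · fin_cases i <;> norm_num [squareData]
  all_goals revert i; decide +kernel

theorem five_sq_dvd_card_classGroup : 5 ^ 2 ∣ Nat.card (ClassGroup (𝓞 K)) := by
  refine (h.prime_pow_card_dvd_card_ker_powMonoidHom (k := 0) (by norm_num) prime_298615687
    (by norm_num) Nat.prime_five fifthPowerData (by decide +kernel) (fun i => ?_)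
    (fun i => ⟨?_, ?_, ?_, ?_, ?_, ?_⟩) (by decide +kernel) (by decide +kernel)).trans
    (Subgroup.card_subgroup_dvd_card _)
  · rw [Int.isCoprime_iff_gcd_eq_one]
    revert i; decide +kernel
  · fin_cases i <;> norm_num [fifthPowerData]
  all_goals revert i; decide +kernel

theorem thirteen_sq_dvd_card_classGroup : 13 ^ 2 ∣ Nat.card (ClassGroup (𝓞 K)) := by
  have hker := h.prime_pow_card_dvd_card_ker_powMonoidHom (ι := Unit) (k := 1) (by norm_num)
    prime_298615687 (by norm_num) (by norm_num : Nat.Prime 13) (fun _ => power169Datum)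
    (fun _ => by decide +kernel) (fun _ => ?_) (fun _ => ⟨?_, ?_, ?_, ?_, ?_, ?_⟩)
    (fun _ _ hne => (hne rfl).elim) (fun _ => by decide +kernel)
  · rw [Fintype.card_unit, pow_one] at hker
    exact hker.trans (Subgroup.card_subgroup_dvd_card _)
  · rw [Int.isCoprime_iff_gcd_eq_one]
    decide +kernel
  · norm_num [power169Datum]
  all_goals decide +kernel

end Certificates

section Regulator

open InfinitePlace NumberField.Units

variable {K : Type*} [Field K] [NumberField K]

/-- The enumeration of the infinite places of a totally real field by a full set of real
embeddings. -/
noncomputable def infinitePlaceEquiv {ι : Type*} [Fintype ι] {φ : ι → K →ₐ[ℚ] ℝ}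
    (hφ : Function.Injective φ) (hcard : Fintype.card ι = finrank ℚ K) :
    ι ≃ InfinitePlace K :=
  .ofBijective (fun i => InfinitePlace.mk (complexEmbeddingEquiv hφ hcard i : K →+* ℂ)) <| by
    refine ⟨fun i j hij => (complexEmbeddingEquiv hφ hcard).injective <| AlgHom.ext fun x => ?_,
      fun v => ?_⟩
    · rcases mk_eq_iff.mp hij with hij | hij
      · exact DFunLike.congr_fun hij x
      · simpa [ComplexEmbedding.conjugate_coe_eq, complexEmbeddingEquiv_apply] using
          DFunLike.congr_fun hij x
    · obtain ⟨i, hi⟩ := (complexEmbeddingEquiv hφ hcard).surjective v.embedding.toRatAlgHom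
      exact ⟨i, by simp only [hi]; exact mk_embedding v⟩

theorem infinitePlaceEquiv_apply {ι : Type*} [Fintype ι] {φ : ι → K →ₐ[ℚ] ℝ}
    (hφ : Function.Injective φ) (hcard : Fintype.card ι = finrank ℚ K) (i : ι) (x : K) :
    infinitePlaceEquiv hφ hcard i x = |φ i x| := by
  change ‖complexEmbeddingEquiv hφ hcard i x‖ = _
  rw [complexEmbeddingEquiv_apply, Complex.norm_real, Real.norm_eq_abs]

omit [NumberField K] in
theorem closure_sup_torsion_eq_top {v : Fin 2 → (𝓞 K)ˣ}
    (hv : ∀ u, ∃ i j : ℤ, u = v 0 ^ i * v 1 ^ j ∨ u = -(v 0 ^ i * v 1 ^ j)) :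
    Subgroup.closure (Set.range v) ⊔ torsion K = ⊤ := by
  refine eq_top_iff.mpr fun u _ => ?_
  have hmem (i : Fin 2) : v i ∈ Subgroup.closure (Set.range v) :=
    Subgroup.subset_closure ⟨i, rfl⟩
  have hneg : (-1 : (𝓞 K)ˣ) ∈ torsion K := by
    rw [torsion, CommGroup.mem_torsion, isOfFinOrder_iff_pow_eq_one]
    exact ⟨2, two_pos, neg_one_sq⟩
  obtain ⟨i, j, rfl | rfl⟩ := hv u
  · exact Subgroup.mem_sup_left (mul_mem (zpow_mem (hmem 0) i) (zpow_mem (hmem 1) j))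
  · rw [neg_eq_neg_one_mul]
    exact mul_mem (Subgroup.mem_sup_right hneg)
      (Subgroup.mem_sup_left (mul_mem (zpow_mem (hmem 0) i) (zpow_mem (hmem 1) j)))

theorem regulator_eq_abs_det_of_cubic (hK : finrank ℚ K = 3) {φ : Fin 3 → K →ₐ[ℚ] ℝ}
    (hφ : Function.Injective φ) {v : Fin 2 → (𝓞 K)ˣ}
    (hv : ∀ u, ∃ i j : ℤ, u = v 0 ^ i * v 1 ^ j ∨ u = -(v 0 ^ i * v 1 ^ j)) :
    regulator K = |(Real.log |φ 1 (v 0)|) * (Real.log |φ 2 (v 1)|) -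
      (Real.log |φ 1 (v 1)|) * (Real.log |φ 2 (v 0)|)| := by
  classical
  have hcard : Fintype.card (Fin 3) = finrank ℚ K := by rw [hK, Fintype.card_fin]
  have := isTotallyReal_of_real_embeddings hφ hcard
  let W := infinitePlaceEquiv hφ hcard
  have hrank : rank K = 2 := by rw [rank, ← Fintype.card_congr W, Fintype.card_fin]
  let u : Fin (rank K) → (𝓞 K)ˣ := v ∘ finCongr hrank
  let E : Fin 2 ≃ {w : InfinitePlace K // w ≠ W 0} :=
    (finSuccAboveEquiv (0 : Fin 3)).trans (W.subtypeEquiv fun i => W.injective.ne_iff.symm)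
  have hE0 : (E 0 : InfinitePlace K) = W 1 := rfl
  have hE1 : (E 1 : InfinitePlace K) = W 2 := rfl
  have hdet := regOfFamily_eq_det u (W 0) (E.symm.trans (finCongr hrank).symm)
  rw [← Matrix.det_submatrix_equiv_self E, Matrix.det_fin_two] at hdet
  simp only [Matrix.submatrix_apply, Matrix.of_apply, IsTotallyReal.mult_eq, Nat.cast_one,
    one_mul, Equiv.trans_apply, Equiv.symm_apply_apply, u, Function.comp_apply,
    Equiv.apply_symm_apply, hE0, hE1, W, infinitePlaceEquiv_apply] at hdet
  have hclosure : Subgroup.closure (Set.range u) ⊔ torsion K = ⊤ := by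
    rw [(finCongr hrank).surjective.range_comp, closure_sup_torsion_eq_top hv]
  have hreg := regOfFamily_div_regulator u
  rw [hclosure, Subgroup.index_top, Nat.cast_one,
    div_eq_one_iff_eq (regulator_ne_zero K)] at hreg
  rw [← hreg, hdet, mul_comm (Real.log |φ 1 (v 1)|)]

theorem dedekindZeta_residue_of_totallyReal_cubic [IsTotallyReal K] (hK : finrank ℚ K = 3) :
    dedekindZeta_residue K =
      4 * regulator K * classNumber K / Real.sqrt |(discr K : ℝ)| := by
  rw [dedekindZeta_residue_def, IsTotallyReal.nrComplexPlaces_eq_zero, ← IsTotallyReal.finrank, hK,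
    torsionOrder_eq_two_of_odd_finrank (by rw [hK]; decide)]
  push_cast
  ring

variable {θ : 𝓞 K} {a : ℤ}

/-- A lower bound for `log² (ρ + 1) - log (ρ + 1) log ρ + log² ρ`, `ρ` being the dominant root. -/
theorem IsSimplestCubicGenerator.sq_log_le_regulator (h : IsSimplestCubicGenerator a θ)
    (ha : 32 ≤ a) {p : ℕ} (hp : p.Prime) (hpa : (p : ℤ) = a ^ 2 + 3 * a + 9) :
    Real.log (a + 1) ^ 2 ≤ regulator K := by
  have ha' : 0 ≤ a := by linarith
  have haR : (32 : ℝ) ≤ a := by exact_mod_cast ha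
  obtain ⟨φ, hφ⟩ := h.exists_isConjugateSystem ha'
  rw [regulator_eq_abs_det_of_cubic h.finrank_eq hφ.injective
    (v := ![h.unit, h.unitAddOne]) (h.unit_eq_or_eq_neg ha hp hpa)]
  simp only [Matrix.cons_val_zero, Matrix.cons_val_one, h.coe_unit, h.coe_unitAddOne, map_add,
    map_one]
  refine le_trans ?_ (le_abs_self _)
  rw [hφ.log_abs_second ha', hφ.log_abs_second_add_one ha', hφ.log_abs_third ha',
    hφ.log_abs_third_add_one ha']
  have hpos := Real.log_pos (show 1 < (a : ℝ) + 1 by linarith)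
  have hlog := Real.log_le_log (by linarith) hφ.lt_dominant.le
  have hlog' := hφ.log_dominant_le ha'
  nlinarith [mul_nonneg (hpos.le.trans hlog) (sub_nonneg.mpr hlog')]

theorem IsSimplestCubicGenerator.dedekindZeta_residue_eq (h : IsSimplestCubicGenerator a θ)
    (ha : 0 ≤ a) {p : ℕ} (hp : p.Prime) (hpa : (p : ℤ) = a ^ 2 + 3 * a + 9) :
    dedekindZeta_residue K = 4 * regulator K * classNumber K / p := by
  obtain ⟨φ, hφ⟩ := h.exists_isConjugateSystem ha
  have := isTotallyReal_of_real_embeddings hφ.injective (by rw [h.finrank_eq, Fintype.card_fin])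
  rw [dedekindZeta_residue_of_totallyReal_cubic h.finrank_eq, h.discr_eq ha hp hpa]
  push_cast
  rw [abs_of_nonneg (by positivity), Real.sqrt_sq (by positivity)]

end Regulator

section CubicGaussSums

theorem eq_of_sq_add_twentySeven_mul_sq {p s t m : ℤ} (hp : Prime p) (hs : s ^ 2 + 27 = 4 * p)
    (ht : t ^ 2 + 27 * m ^ 2 = 4 * p) (hs3 : s % 3 = 1) (ht3 : t % 3 = 1) : t = s := by
  have hpos : 0 < p := by nlinarith [sq_nonneg s]
  -- `(s ^ 2 + 27) * (t ^ 2 + 27 * m ^ 2) = (s * t ± 27 * m) ^ 2 + 27 * (s * m ∓ t) ^ 2`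
  have heq_zero {d : ℤ} (hd : 27 * d ^ 2 ≤ 16 * p ^ 2) (hdvd : p ∣ d) : d = 0 :=
    Int.eq_zero_of_abs_lt_dvd hdvd (abs_lt_of_sq_lt_sq (by nlinarith) hpos.le)
  have hdvd : p ∣ (s * m - t) * (s * m + t) :=
    ⟨4 * (m ^ 2 - 1), by linear_combination m ^ 2 * hs - ht⟩
  have hsq : t ^ 2 = s ^ 2 * m ^ 2 := by
    rcases hp.dvd_or_dvd hdvd with h | h
    · have := heq_zero (by nlinarith [sq_nonneg (s * t + 27 * m)]) h
      linear_combination (-(s * m) - t) * this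
    · have := heq_zero (by nlinarith [sq_nonneg (s * t - 27 * m)]) h
      linear_combination (-(s * m) + t) * this
  have hm : m ^ 2 = 1 := by
    refine mul_left_cancel₀ (show 4 * p ≠ 0 by positivity) ?_
    linear_combination ht - hsq - m ^ 2 * hs
  rcases sq_eq_sq_iff_eq_or_eq_neg.mp (show t ^ 2 = s ^ 2 by rw [hsq, hm, mul_one]) with h | h
  · exact h
  · omega

theorem sq_add_self_add_one_eq_zero {R : Type*} [CommRing R] [IsDomain R] {c : R}
    (hc : c ^ 3 = 1) (hc1 : c ≠ 1) : c ^ 2 + c + 1 = 0 :=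
  (mul_eq_zero.mp (show (c - 1) * (c ^ 2 + c + 1) = 0 by linear_combination hc)).resolve_left
    (sub_ne_zero.mpr hc1)

theorem exists_eq_add_mul_of_mem_adjoin {R : Type*} [CommRing R] {w : R}
    (hw : w ^ 2 + w + 1 = 0) {z : R} (hz : z ∈ Algebra.adjoin ℤ {w}) :
    ∃ a b : ℤ, z = a + b * w := by
  induction hz using Algebra.adjoin_induction with
  | mem x hx => rw [Set.mem_singleton_iff] at hx; exact ⟨0, 1, by simp [hx]⟩
  | algebraMap r => exact ⟨r, 0, by simp⟩
  | add x y _ _ hx hy =>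
    obtain ⟨a, b, rfl⟩ := hx
    obtain ⟨c, d, rfl⟩ := hy
    exact ⟨a + c, b + d, by push_cast; ring⟩
  | mul x y _ _ hx hy =>
    obtain ⟨a, b, rfl⟩ := hx
    obtain ⟨c, d, rfl⟩ := hy
    exact ⟨a * c - b * d, a * d + b * c - b * d, by push_cast; linear_combination b * d * hw⟩

theorem conj_eq_sq_of_pow_three_eq_one {w : ℂ} (hw : w ^ 3 = 1) : starRingEnd ℂ w = w ^ 2 := by
  have hnorm : w * starRingEnd ℂ w = 1 := by
    rw [Complex.mul_conj, Complex.normSq_eq_norm_sq,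
      Complex.norm_eq_one_of_pow_eq_one hw (by norm_num)]
    simp
  linear_combination w ^ 2 * hnorm - starRingEnd ℂ w * hw

variable {p : ℕ} [Fact p.Prime] {χ : MulChar (ZMod p) ℂ}

theorem jacobiSum_inv_inv (χ ψ : MulChar (ZMod p) ℂ) :
    jacobiSum χ⁻¹ ψ⁻¹ = starRingEnd ℂ (jacobiSum χ ψ) := by
  simp only [jacobiSum, map_sum, map_mul, MulChar.star_apply', starRingEnd_apply]

theorem ne_one_of_orderOf_eq_three {G : Type*} [Group G] {g : G} (hg : orderOf g = 3) :
    g ≠ 1 ∧ g * g ≠ 1 := by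
  refine ⟨fun h => by simp [h] at hg, fun h => ?_⟩
  have := orderOf_dvd_of_pow_eq_one ((sq g).trans h)
  rw [hg] at this
  norm_num at this

/-- Modulo `3` the Jacobi sum is `-1`, so its trace is `1` and its Eisenstein norm form loses a
factor `9`. -/
theorem exists_jacobiSum_trace (hχ : orderOf χ = 3) : ∃ t m : ℤ,
    jacobiSum χ χ + jacobiSum χ⁻¹ χ⁻¹ = t ∧ t ^ 2 + 27 * m ^ 2 = 4 * p ∧ t % 3 = 1 := by
  have hχ3 : χ ^ 3 = 1 := hχ ▸ pow_orderOf_eq_one χ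
  obtain ⟨hχ1, hχ2⟩ := ne_one_of_orderOf_eq_three hχ
  have hw := Complex.isPrimitiveRoot_exp 3 (by norm_num)
  obtain ⟨z, hz, hJ⟩ := exists_jacobiSum_eq_neg_one_add (by norm_num) hχ3 hχ3
    (hχ ▸ χ.orderOf_dvd_card_sub_one) hw
  generalize Complex.exp _ = w at hw hz hJ
  have hw3 : w ^ 3 = 1 := hw.pow_eq_one
  have hw2 := sq_add_self_add_one_eq_zero hw3 (hw.ne_one (by norm_num))
  obtain ⟨a, b, rfl⟩ := exists_eq_add_mul_of_mem_adjoin hw2 hz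
  have hJ' : jacobiSum χ χ = ((3 * b - 1 : ℤ) : ℂ) + ((3 * (b - a) : ℤ) : ℂ) * w := by
    rw [hJ]
    push_cast
    linear_combination (b * w + a - 3 * b) * hw2
  have hJinv : jacobiSum χ⁻¹ χ⁻¹ = ((3 * b - 1 : ℤ) : ℂ) + ((3 * (b - a) : ℤ) : ℂ) * w ^ 2 := by
    rw [jacobiSum_inv_inv, hJ', map_add, map_mul, conj_eq_sq_of_pow_three_eq_one hw3, map_intCast,
      map_intCast]
  have hprod := jacobiSum_mul_jacobiSum_inv (F := ZMod p) (F' := ℂ)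
    (by rw [ringChar.eq_zero, ZMod.ringChar_zmod_n]; exact (NeZero.ne p).symm) hχ1 hχ1 hχ2
  rw [hJ', hJinv, ZMod.card] at hprod
  refine ⟨3 * b - 2 + 3 * a, b - a, ?_, ?_, by omega⟩
  · rw [hJ', hJinv]
    push_cast
    linear_combination (3 * (b - a) : ℂ) * hw2
  · have : (((3 * b - 2 + 3 * a) ^ 2 + 27 * (b - a) ^ 2 : ℤ) : ℂ) = ((4 * p : ℤ) : ℂ) := by
      push_cast at hprod ⊢
      linear_combination 4 * hprod - 4 * (9 * (b - a) ^ 2) * hw3 -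
        4 * 3 * (3 * b - 1) * (b - a) * hw2
    exact_mod_cast this

variable {ψ : AddChar (ZMod p) ℂ} (hψ : ψ.IsPrimitive) (hχ : orderOf χ = 3)
include hψ hχ

theorem gaussSum_mul_gaussSum_sq : gaussSum χ ψ * gaussSum (χ ^ 2) ψ = p := by
  have h := gaussSum_mul_gaussSum_pow_orderOf_sub_one (ne_one_of_orderOf_eq_three hχ).1 hψ
  rwa [hχ, MulChar.val_neg_one_eq_one_of_odd_order (by decide) (hχ ▸ pow_orderOf_eq_one χ),
    ZMod.card, one_mul] at h

theorem gaussSum_pow_three : gaussSum χ ψ ^ 3 = p * jacobiSum χ χ := by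
  have h := gaussSum_pow_eq_prod_jacobiSum (χ := χ) (by omega) hψ
  rwa [hχ, MulChar.val_neg_one_eq_one_of_odd_order (by decide) (hχ ▸ pow_orderOf_eq_one χ),
    show Finset.Ico 1 (3 - 1) = {1} from rfl, Finset.prod_singleton, pow_one, ZMod.card,
    one_mul] at h

theorem gaussSum_pow_three_add {t : ℤ} (ht : t ^ 2 + 27 = 4 * p) (ht3 : t % 3 = 1) :
    gaussSum χ ψ ^ 3 + gaussSum (χ ^ 2) ψ ^ 3 = p * t := by
  have hinv : χ ^ 2 = χ⁻¹ := by
    rw [eq_inv_iff_mul_eq_one, ← pow_succ]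
    exact orderOf_dvd_iff_pow_eq_one.mp hχ.dvd
  obtain ⟨t', m, hsum, hnorm, ht'⟩ := exists_jacobiSum_trace hχ
  obtain rfl := eq_of_sq_add_twentySeven_mul_sq (Nat.prime_iff_prime_int.mp Fact.out) ht hnorm ht3
    ht'
  rw [hinv, gaussSum_pow_three hψ hχ, gaussSum_pow_three hψ (by rwa [orderOf_inv]), ← mul_add,
    hsum]

end CubicGaussSums

section GaussianPeriods

open Classical in
/-- The Gaussian period attached to the value `u` of the character `χ`, formed with the additive
character `ψ`; it is allowed to live in any commutative ring. -/
noncomputable def gaussianPeriod {p : ℕ} [NeZero p] {R : Type*} [CommRing R]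
    (χ : MulChar (ZMod p) ℂ) (ψ : AddChar (ZMod p) R) (u : ℂ) : R :=
  ∑ x with χ x = u, ψ x

variable {p : ℕ} [Fact p.Prime] {R : Type*} [CommRing R] {χ : MulChar (ZMod p) ℂ}

theorem map_gaussianPeriod {S : Type*} [CommRing S] (f : R →+* S) (ψ : AddChar (ZMod p) R)
    (u : ℂ) :
    f (gaussianPeriod χ ψ u) = gaussianPeriod χ ((f : R →* S).compAddChar ψ) u :=
  map_sum f _ _

theorem gaussianPeriod_pow_char {q : ℕ} [Fact q.Prime] [CharP R q] (hqp : (q : ZMod p) ≠ 0)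
    (ψ : AddChar (ZMod p) R) (u : ℂ) :
    gaussianPeriod χ ψ u ^ q = gaussianPeriod χ ψ (χ q * u) := by
  have hχq : χ q ≠ 0 := ((isUnit_iff_ne_zero.mpr hqp).map χ).ne_zero
  rw [gaussianPeriod, sum_pow_char]
  refine Finset.sum_equiv (Equiv.mulLeft₀ (q : ZMod p) hqp) (fun x => ?_) fun x _ => ?_
  · simp [hχq]
  · rw [← ψ.map_nsmul_eq_pow, nsmul_eq_mul]
    rfl

theorem map_pow_three_of_ne_zero (hχ : χ ^ 3 = 1) {x : ZMod p} (hx : x ≠ 0) : χ x ^ 3 = 1 := by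
  rw [← MulChar.pow_apply' χ (by norm_num), hχ]
  exact MulChar.one_apply (isUnit_iff_ne_zero.mpr hx)

/-- `(1 + u⁻¹ v + u⁻² v²) / 3` is the indicator of `v = u` on cube roots of unity. -/
theorem three_mul_gaussianPeriod_add_one (hχ : χ ^ 3 = 1) {ψ : AddChar (ZMod p) ℂ} (hψ : ψ ≠ 1)
    {u : ℂ} (hu : u ^ 3 = 1) :
    3 * gaussianPeriod χ ψ u + 1 = u ^ 2 * gaussSum χ ψ + u * gaussSum (χ ^ 2) ψ := by
  classical
  suffices 3 * gaussianPeriod χ ψ u = gaussSum 1 ψ + u ^ 2 * gaussSum χ ψ +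
      u * gaussSum (χ ^ 2) ψ by
    rw [this, gaussSum_one_left hψ]
    ring
  simp only [gaussSum, Finset.mul_sum, ← Finset.sum_add_distrib, gaussianPeriod,
    Finset.sum_filter]
  refine Finset.sum_congr rfl fun x _ => ?_
  rcases eq_or_ne x 0 with rfl | hx
  · have hu0 : (0 : ℂ) ≠ u := by rintro rfl; simp at hu
    simp [MulChar.map_zero, hu0]
  · have hx3 := map_pow_three_of_ne_zero hχ hx
    rw [MulChar.one_apply (isUnit_iff_ne_zero.mpr hx), MulChar.pow_apply' χ (by norm_num)]
    split_ifs with hxu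
    · rw [hxu]
      linear_combination (-2 * ψ x) * hu
    · have hfactor : (χ x - u) * (χ x ^ 2 + χ x * u + u ^ 2) = 0 := by
        linear_combination hx3 - hu
      linear_combination (-u * ψ x) *
        (mul_eq_zero.mp hfactor).resolve_left (sub_ne_zero.mpr hxu) + ψ x * hu

/-- The three elements are, up to the shift by `s`, the roots of the simplest cubic with parameter
`a` in any ring in which they satisfy these relations. -/
structure IsCubicPeriodSystem (a s : ℤ) (x y z : R) : Prop where
  prod_sub (n : ℤ) : (n - s - x) * (n - s - y) * (n - s - z) =
    (n ^ 3 - a * n ^ 2 - (a + 3) * n - 1 : ℤ)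
  sum : x + y + z = -1
  three_mul_sum_mul : 3 * (x * y + y * z + z * x) = (1 - (a ^ 2 + 3 * a + 9) : ℤ)

theorem IsCubicPeriodSystem.map {a s : ℤ} {x y z : R} (h : IsCubicPeriodSystem a s x y z)
    {S : Type*} [CommRing S] (f : R →+* S) : IsCubicPeriodSystem a s (f x) (f y) (f z) where
  prod_sub n := by simpa [_root_.map_ofNat f] using congrArg f (h.prod_sub n)
  sum := by simpa using congrArg f h.sum
  three_mul_sum_mul := by simpa [_root_.map_ofNat f] using congrArg f h.three_mul_sum_mul

theorem IsCubicPeriodSystem.of_injective {a s : ℤ} {x y z : R} {S : Type*} [CommRing S]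
    {f : R →+* S} (hf : Function.Injective f)
    (h : IsCubicPeriodSystem a s (f x) (f y) (f z)) : IsCubicPeriodSystem a s x y z where
  prod_sub n := hf <| by simpa [_root_.map_ofNat f] using h.prod_sub n
  sum := hf <| by simpa using h.sum
  three_mul_sum_mul := hf <| by simpa [_root_.map_ofNat f] using h.three_mul_sum_mul

/-- Lagrange's resolvents `g` and `g'` determine the cubic. -/
theorem isCubicPeriodSystem_of_resolvents {a s : ℤ} (hs : a + 1 = 3 * s) {g g' c x y z : ℂ}
    (hc : c ^ 2 + c + 1 = 0) (hmul : g * g' = a ^ 2 + 3 * a + 9)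
    (hcube : g ^ 3 + g' ^ 3 = (a ^ 2 + 3 * a + 9) * (2 * a + 3)) (hx : 3 * x + 1 = g + g')
    (hy : 3 * y + 1 = c ^ 2 * g + c * g') (hz : 3 * z + 1 = c * g + c ^ 2 * g') :
    IsCubicPeriodSystem a s x y z := by
  have hc2 : c ^ 2 = -1 - c := by linear_combination hc
  have hs' : (s : ℂ) = (a + 1) / 3 := by
    have : (a : ℂ) + 1 = 3 * s := by exact_mod_cast congrArg (Int.cast : ℤ → ℂ) hs
    linear_combination -this / 3
  obtain rfl : x = (g + g' - 1) / 3 := by linear_combination hx / 3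
  obtain rfl : y = ((-1 - c) * g + c * g' - 1) / 3 := by linear_combination (hy + g * hc2) / 3
  obtain rfl : z = (c * g + (-1 - c) * g' - 1) / 3 := by linear_combination (hz + g' * hc2) / 3
  refine ⟨fun n => ?_, by ring, ?_⟩
  · push_cast
    rw [hs']
    linear_combination -(1 / 27 : ℂ) * hcube - (n / 3 - a / 9 : ℂ) * hmul +
      (g - g') ^ 2 * (g + g' + a - 3 * n) / 27 * hc
  · push_cast
    linear_combination (-1 : ℂ) * hmul - (g - g') ^ 2 / 3 * hc

theorem isCubicPeriodSystem_gaussianPeriod {a s : ℤ} (hpa : (p : ℤ) = a ^ 2 + 3 * a + 9)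
    (hs : a + 1 = 3 * s) (hχ : orderOf χ = 3) {ψ : AddChar (ZMod p) ℂ} (hψ : ψ.IsPrimitive)
    {c : ℂ} (hc3 : c ^ 3 = 1) (hc1 : c ≠ 1) :
    IsCubicPeriodSystem a s (gaussianPeriod χ ψ 1) (gaussianPeriod χ ψ c)
      (gaussianPeriod χ ψ (c ^ 2)) := by
  have hχ3 : χ ^ 3 = 1 := hχ ▸ pow_orderOf_eq_one χ
  have hψ1 : ψ ≠ 1 := fun h => hψ one_ne_zero (by ext; simp [h])
  have hmul := gaussSum_mul_gaussSum_sq hψ hχ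
  have hcube := gaussSum_pow_three_add hψ hχ (t := 2 * a + 3) (by rw [hpa]; ring) (by omega)
  have hp : (p : ℂ) = a ^ 2 + 3 * a + 9 := by exact_mod_cast congrArg (Int.cast : ℤ → ℂ) hpa
  push_cast [hp] at hmul hcube
  have hperiod (u : ℂ) := three_mul_gaussianPeriod_add_one hχ3 hψ1 (u := u)
  refine isCubicPeriodSystem_of_resolvents hs (sq_add_self_add_one_eq_zero hc3 hc1) hmul hcube
    ?_ (hperiod c hc3) ?_
  · simpa using hperiod 1 (one_pow 3)
  · rw [hperiod (c ^ 2) (by rw [← pow_mul, mul_comm, pow_mul, hc3, one_pow])]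
    linear_combination c * gaussSum χ ψ * hc3

/-- Frobenius permutes the periods cyclically, so a period in the prime field forces all three to
coincide, and then `p = 0`. -/
theorem IsCubicPeriodSystem.cast_eq_zero_of_cyclic [IsDomain R] {q : ℕ} [Fact q.Prime] [CharP R q]
    {a s n : ℤ} {x y z : R} (h : IsCubicPeriodSystem a s x y z)
    (hn : (q : ℤ) ∣ n ^ 3 - a * n ^ 2 - (a + 3) * n - 1) (hx : x ^ q = y) (hy : y ^ q = z)
    (hz : z ^ q = x) : ((a ^ 2 + 3 * a + 9 : ℤ) : R) = 0 := by
  have hfix : ((n : R) - s) ^ q = n - s := by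
    have := map_intCast (frobenius R q) (n - s)
    rwa [frobenius_def, Int.cast_sub] at this
  have hroot := h.prod_sub n
  rw [(CharP.intCast_eq_zero_iff R q _).mpr hn, mul_eq_zero, mul_eq_zero, sub_eq_zero, sub_eq_zero,
    sub_eq_zero] at hroot
  have hall : y = x ∧ z = x := by
    rcases hroot with (hroot | hroot) | hroot <;> rw [hroot] at hfix <;> simp_all
  have hsum := h.sum
  have hmul := h.three_mul_sum_mul
  rw [hall.1, hall.2] at hsum hmul
  push_cast at hmul ⊢
  linear_combination hmul - (3 * x - 1) * hsum

theorem exists_integral_addChar_isPrimitive (p : ℕ) [NeZero p] :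
    ∃ ψ : AddChar (ZMod p) (integralClosure ℤ ℂ),
      ((algebraMap (integralClosure ℤ ℂ) ℂ : _ →* ℂ).compAddChar ψ).IsPrimitive := by
  have hζ := Complex.isPrimitiveRoot_exp p (NeZero.ne p)
  let ζ : integralClosure ℤ ℂ := ⟨_, hζ.isIntegral (NeZero.pos p)⟩
  refine ⟨AddChar.zmodChar p (ζ := ζ) (Subtype.ext hζ.pow_eq_one), ?_⟩
  convert AddChar.zmodChar_primitive_of_primitive_root p hζ
  ext x
  rfl

theorem exists_isMaximal_charP_quotient (R : Type*) [CommRing R] [Algebra.IsIntegral ℤ R]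
    [CharZero R] {q : ℕ} (hq : q.Prime) : ∃ m : Ideal R, m.IsMaximal ∧ CharP (R ⧸ m) q := by
  have : Fact q.Prime := ⟨hq⟩
  have := Int.ideal_span_isMaximal_of_prime q
  obtain ⟨m, hm, hmq⟩ := Ideal.exists_ideal_over_maximal_of_isIntegral (S := R)
    (Ideal.span {(q : ℤ)}) (by
      rw [(RingHom.injective_iff_ker_eq_bot _).mp (algebraMap ℤ R).injective_int]
      exact bot_le)
  have hmem : (q : ℤ) ∈ m.comap (algebraMap ℤ R) := hmq ▸ Ideal.mem_span_singleton_self _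
  refine ⟨m, hm, (CharP.charP_iff_prime_eq_zero hq).mpr ?_⟩
  simpa using Ideal.Quotient.eq_zero_iff_mem.mpr (Ideal.mem_comap.mp hmem)

theorem cubicCharacter_eq_one_of_dvd {a s : ℤ} (hpa : (p : ℤ) = a ^ 2 + 3 * a + 9)
    (hs : a + 1 = 3 * s) (hχ : orderOf χ = 3) {q : ℕ} (hq : q.Prime) (hqp : q ≠ p) {n : ℤ}
    (hn : (q : ℤ) ∣ n ^ 3 - a * n ^ 2 - (a + 3) * n - 1) : χ q = 1 := by
  have : Fact q.Prime := ⟨hq⟩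
  have hq0 : (q : ZMod p) ≠ 0 := by
    rw [ne_eq, ZMod.natCast_eq_zero_iff, Nat.prime_dvd_prime_iff_eq Fact.out hq]
    exact hqp.symm
  by_contra hne
  have hc3 := map_pow_three_of_ne_zero (hχ ▸ pow_orderOf_eq_one χ) hq0
  obtain ⟨ψ, hψ⟩ := exists_integral_addChar_isPrimitive p
  obtain ⟨m, hm, _⟩ := exists_isMaximal_charP_quotient (integralClosure ℤ ℂ) hq
  have hperiods := isCubicPeriodSystem_gaussianPeriod hpa hs hχ hψ hc3 hne
  simp only [← map_gaussianPeriod] at hperiods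
  have hquot := (IsCubicPeriodSystem.of_injective Subtype.val_injective hperiods).map
    (Ideal.Quotient.mk m)
  simp only [map_gaussianPeriod] at hquot
  have hzero := hquot.cast_eq_zero_of_cyclic hn (by rw [gaussianPeriod_pow_char hq0, mul_one])
    (by rw [gaussianPeriod_pow_char hq0, sq])
    (by rw [gaussianPeriod_pow_char hq0, ← pow_succ', hc3])
  rw [← hpa, Int.cast_natCast, CharP.cast_eq_zero_iff _ q,
    Nat.prime_dvd_prime_iff_eq hq Fact.out] at hzero
  exact hqp hzero

end GaussianPeriods

section EulerProduct

open Ideal UniqueFactorizationMonoid Filter Topology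

theorem prod_pow_count_normalizedFactors {R : Type*} [CommRing R] [IsDedekindDomain R]
    [DecidableEq (Ideal R)] {I : Ideal R} (hI : I ≠ ⊥) {T : Finset (Ideal R)}
    (hT : ∀ P ∈ normalizedFactors I, P ∈ T) :
    ∏ P ∈ T, P ^ (normalizedFactors I).count P = I := by
  conv_rhs => rw [← Ideal.prod_normalizedFactors_eq_self hI]
  exact (Finset.prod_multiset_count_of_subset _ T fun P hP =>
    hT P (Multiset.mem_toFinset.mp hP)).symm

theorem sum_le_prod_one_sub_inv {R : Type*} [CommRing R] [IsDedekindDomain R] (f : Ideal R →* ℝ)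
    (hf : ∀ I, 0 ≤ f I) {T S : Finset (Ideal R)} (hT : ∀ P ∈ T, f P < 1)
    (hS : ∀ I ∈ S, I ≠ ⊥ ∧ ∀ P ∈ normalizedFactors I, P ∈ T) :
    ∑ I ∈ S, f I ≤ ∏ P ∈ T, (1 - f P)⁻¹ := by
  classical
  let M := S.sup (fun I => (normalizedFactors I).card) + 1
  let exponents (I : Ideal R) (P : T) : ℕ := (normalizedFactors I).count P.1
  have hprod (I : Ideal R) (hI : I ∈ S) : ∏ P : T, P.1 ^ exponents I P = I := by
    rw [Finset.prod_coe_sort T fun P => P ^ (normalizedFactors I).count P]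
    exact prod_pow_count_normalizedFactors (hS I hI).1 (hS I hI).2
  have hinj : Set.InjOn exponents S := fun I hI J hJ hIJ => by
    rw [← hprod I hI, ← hprod J hJ, hIJ]
  have hmem : S.image exponents ⊆ Fintype.piFinset fun _ => Finset.range M := by
    refine Finset.image_subset_iff.mpr fun I hI => Fintype.mem_piFinset.mpr fun P => ?_
    exact Finset.mem_range.mpr <| Nat.lt_succ_of_le <| (Multiset.count_le_card _ _).trans <|
      Finset.le_sup (f := fun I => (normalizedFactors I).card) hI
  calc ∑ I ∈ S, f I
    _ = ∑ I ∈ S, ∏ P : T, f P ^ exponents I P := Finset.sum_congr rfl fun I hI => by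
      conv_lhs => rw [← hprod I hI, map_prod]
      simp only [map_pow]
    _ = ∑ e ∈ S.image exponents, ∏ P : T, f P ^ e P := by
      rw [Finset.sum_image hinj]
    _ ≤ ∑ e ∈ Fintype.piFinset fun _ => Finset.range M, ∏ P : T, f P ^ e P :=
      Finset.sum_le_sum_of_subset_of_nonneg hmem fun _ _ _ =>
        Finset.prod_nonneg fun _ _ => pow_nonneg (hf _) _
    _ = ∏ P : T, ∑ k ∈ Finset.range M, f P ^ k := (Finset.prod_univ_sum _ _).symm
    _ ≤ ∏ P : T, (1 - f P)⁻¹ := by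
      refine Finset.prod_le_prod (fun P _ => Finset.sum_nonneg fun k _ => pow_nonneg (hf _) k)
        fun P _ => ?_
      rw [← one_div, le_div_iff₀ (sub_pos.mpr (hT P P.2)), geom_sum_mul_neg]
      exact sub_le_self _ (pow_nonneg (hf _) _)
    _ = ∏ P ∈ T, (1 - f P)⁻¹ := Finset.prod_coe_sort T fun P => (1 - f P)⁻¹

variable {K : Type*} [Field K] [NumberField K]

/-- The map `I ↦ N(I) ^ (-s)`, whose values are summed in the Dedekind zeta function. -/
noncomputable def absNormRpowNeg (K : Type*) [Field K] [NumberField K] (s : ℝ) :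
    Ideal (𝓞 K) →* ℝ where
  toFun I := (absNorm I : ℝ) ^ (-s)
  map_one' := by simp
  map_mul' I J := by rw [map_mul, Nat.cast_mul, Real.mul_rpow (by positivity) (by positivity)]

theorem absNormRpowNeg_nonneg (s : ℝ) (I : Ideal (𝓞 K)) : 0 ≤ absNormRpowNeg K s I :=
  Real.rpow_nonneg (Nat.cast_nonneg _) _

theorem rpow_neg_lt_one {n : ℕ} (hn : 1 < n) {s : ℝ} (hs : 0 < s) : (n : ℝ) ^ (-s) < 1 :=
  Real.rpow_lt_one_of_one_lt_of_neg (by exact_mod_cast hn) (neg_lt_zero.mpr hs)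

theorem absNormRpowNeg_of_liesOver {q : ℕ} (s : ℝ) (P : Ideal (𝓞 K)) [P.IsPrime]
    [P.LiesOver (span {(q : ℤ)})] :
    absNormRpowNeg K s P = ((q : ℝ) ^ (-s)) ^ P.inertiaDeg ℤ := by
  change (absNorm P : ℝ) ^ (-s) = _
  rw [← pow_inertiaDeg q P, Nat.cast_pow, ← Real.rpow_natCast, ← Real.rpow_natCast,
    ← Real.rpow_mul (by positivity), ← Real.rpow_mul (by positivity), mul_comm]

/-- The prime ideals of `𝓞 K` above the rational prime `q`. -/
noncomputable def primesAbove (K : Type*) [Field K] [NumberField K] (q : ℕ) :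
    Finset (Ideal (𝓞 K)) :=
  IsDedekindDomain.primesOverFinset (span {(q : ℤ)}) (𝓞 K)

theorem mem_primesAbove_iff {q : ℕ} (hq : q.Prime) {P : Ideal (𝓞 K)} :
    P ∈ primesAbove K q ↔ P.IsPrime ∧ P.LiesOver (span {(q : ℤ)}) :=
  have : Fact q.Prime := ⟨hq⟩
  IsDedekindDomain.mem_primesOverFinset_iff (by simpa using hq.ne_zero) _

theorem absNormRpowNeg_lt_one {q : ℕ} (hq : q.Prime) {P : Ideal (𝓞 K)}
    (hP : P ∈ primesAbove K q) {s : ℝ} (hs : 0 < s) :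
    absNormRpowNeg K s P < 1 := by
  obtain ⟨_, _⟩ := (mem_primesAbove_iff hq).mp hP
  rw [absNormRpowNeg_of_liesOver (q := q)]
  exact pow_lt_one₀ (by positivity) (rpow_neg_lt_one hq.one_lt hs) (inertiaDeg_pos P ℤ).ne'

theorem pairwiseDisjoint_primesAbove :
    {q : ℕ | q.Prime}.PairwiseDisjoint (primesAbove K) := by
  intro q hq r hr hqr
  refine Finset.disjoint_left.mpr fun P hPq hPr => hqr ?_
  have hPq := ((mem_primesAbove_iff hq).mp hPq).2.over
  have hPr := ((mem_primesAbove_iff hr).mp hPr).2.over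
  have := congrArg absNorm (hPq.trans hPr.symm)
  simpa using this

/-- The factor at the rational prime `q` of the Euler product of the Dedekind zeta function, as a
function of a real variable. -/
noncomputable def eulerFactor (K : Type*) [Field K] [NumberField K] (q : ℕ) (s : ℝ) : ℝ :=
  ∏ P ∈ primesAbove K q, (1 - absNormRpowNeg K s P)⁻¹

theorem eulerFactor_nonneg {q : ℕ} (hq : q.Prime) {s : ℝ} (hs : 0 < s) : 0 ≤ eulerFactor K q s :=
  Finset.prod_nonneg fun _ hP =>
    inv_nonneg.mpr (sub_nonneg.mpr (absNormRpowNeg_lt_one hq hP hs).le)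

theorem sum_absNormRpowNeg_le_prod_eulerFactor {s : ℝ} (hs : 0 < s) {S : Finset (Ideal (𝓞 K))}
    {M : ℕ} (hS : ∀ I ∈ S, I ≠ ⊥ ∧ absNorm I < M) :
    ∑ I ∈ S, absNormRpowNeg K s I ≤ ∏ q ∈ M.primesBelow, eulerFactor K q s := by
  classical
  simp only [eulerFactor]
  rw [← Finset.prod_biUnion <|
    pairwiseDisjoint_primesAbove.subset fun q hq => Nat.prime_of_mem_primesBelow hq]
  refine sum_le_prod_one_sub_inv _ (absNormRpowNeg_nonneg s) (fun P hP => ?_)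
    fun I hI => ⟨(hS I hI).1, fun P hP => ?_⟩
  · obtain ⟨q, hq, hqP⟩ := Finset.mem_biUnion.mp hP
    exact absNormRpowNeg_lt_one (Nat.prime_of_mem_primesBelow hq) hqP hs
  · obtain ⟨hI0, hIM⟩ := hS I hI
    obtain ⟨hPprime, hIP⟩ := (Ideal.mem_normalizedFactors_iff hI0).mp hP
    have : NeZero P := ⟨ne_bot_of_le_ne_bot hI0 hIP⟩
    have hq := Nat.absNorm_under_prime P
    have hqI : absNorm (P.under ℤ) ∣ absNorm I :=
      (Int.absNorm_under_dvd_absNorm P).trans (absNorm_dvd_absNorm_of_le hIP)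
    refine Finset.mem_biUnion.mpr ⟨absNorm (P.under ℤ), Nat.mem_primesBelow.mpr ⟨?_, hq⟩,
      (mem_primesAbove_iff hq).mpr ⟨hPprime, inferInstance⟩⟩
    exact (Nat.le_of_dvd (Nat.pos_of_ne_zero (by rwa [ne_eq, absNorm_eq_zero_iff])) hqI).trans_lt
      hIM

theorem norm_term_dedekindZeta_eq_sum {s : ℝ} {X n : ℕ} (hn : n < X) {S : Finset (Ideal (𝓞 K))}
    (hS : ∀ I, I ∈ S ↔ I ≠ ⊥ ∧ absNorm I < X) :
    ‖LSeries.term (fun n => (Nat.card {I : Ideal (𝓞 K) // absNorm I = n} : ℂ)) s n‖ =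
      ∑ I ∈ S with absNorm I = n, absNormRpowNeg K s I := by
  rcases Nat.eq_zero_or_pos n with rfl | hn0
  · rw [LSeries.term_zero, norm_zero, Finset.filter_false_of_mem, Finset.sum_empty]
    exact fun I hI => absNorm_eq_zero_iff.not.mpr ((hS I).mp hI).1
  · have hcard : Nat.card {I : Ideal (𝓞 K) // absNorm I = n} = (S.filter (absNorm · = n)).card := by
      refine Nat.subtype_card _ fun I => ?_
      rw [Finset.mem_filter, hS, and_iff_right_iff_imp]
      rintro rfl
      exact ⟨absNorm_eq_zero_iff.not.mp hn0.ne', hn⟩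
    have hval : ∀ I ∈ S.filter (absNorm · = n), absNormRpowNeg K s I = (n : ℝ) ^ (-s) := by
      intro I hI
      rw [← (Finset.mem_filter.mp hI).2]
      rfl
    rw [Finset.sum_congr rfl hval, Finset.sum_const, nsmul_eq_mul, LSeries.term_of_ne_zero hn0.ne',
      norm_div, Complex.norm_natCast, Complex.norm_natCast_cpow_of_pos hn0, Complex.ofReal_re,
      Real.rpow_neg (by positivity), div_eq_mul_inv, hcard]

theorem norm_dedekindZeta_le_of_sum_le {s C : ℝ}
    (hC : ∀ S : Finset (Ideal (𝓞 K)), (∀ I ∈ S, I ≠ ⊥) → ∑ I ∈ S, absNormRpowNeg K s I ≤ C) :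
    ‖dedekindZeta K s‖ ≤ C := by
  classical
  rw [dedekindZeta, LSeries]
  by_cases hsum : Summable
      (LSeries.term (fun n => (Nat.card {I : Ideal (𝓞 K) // absNorm I = n} : ℂ)) s)
  · refine le_of_tendsto hsum.hasSum.tendsto_sum_nat.norm (Eventually.of_forall fun X => ?_)
    let S := (finite_setOfPred_absNorm_le (S := 𝓞 K) X).toFinset.filter
      fun I => I ≠ ⊥ ∧ absNorm I < X
    have hS (I : Ideal (𝓞 K)) : I ∈ S ↔ I ≠ ⊥ ∧ absNorm I < X := by
      simp only [S, Finset.mem_filter, Set.Finite.mem_toFinset, Set.mem_ofPred_eq,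
        and_iff_right_iff_imp]
      exact fun h => h.2.le
    refine le_trans ?_ (hC S fun I hI => ((hS I).mp hI).1)
    rw [← Finset.sum_fiberwise_of_maps_to (s := S) (t := Finset.range X) (g := absNorm)
      fun I hI => Finset.mem_range.mpr ((hS I).mp hI).2]
    exact (norm_sum_le _ _).trans_eq <| Finset.sum_congr rfl fun n hn =>
      norm_term_dedekindZeta_eq_sum (Finset.mem_range.mp hn) hS
  · rw [tsum_eq_zero_of_not_summable hsum, norm_zero]
    simpa using hC ∅

theorem norm_dedekindZeta_le_of_eulerFactor_le {s : ℝ} (hs : 0 < s) {g : ℕ → ℝ} {L : ℝ}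
    (hg : ∀ q, q.Prime → eulerFactor K q s ≤ g q)
    (hL : Tendsto (fun M : ℕ => ∏ q ∈ M.primesBelow, g q) atTop (𝓝 L)) :
    ‖dedekindZeta K s‖ ≤ L := by
  refine norm_dedekindZeta_le_of_sum_le fun S hS => ge_of_tendsto hL ?_
  filter_upwards [eventually_gt_atTop (S.sup absNorm)] with M hM
  refine (sum_absNormRpowNeg_le_prod_eulerFactor hs fun I hI =>
    ⟨hS I hI, (Finset.le_sup hI).trans_lt hM⟩).trans ?_
  exact Finset.prod_le_prod (fun q hq => eulerFactor_nonneg (Nat.prime_of_mem_primesBelow hq) hs)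
    fun q hq => hg q (Nat.prime_of_mem_primesBelow hq)

theorem sum_ramificationIdx_mul_inertiaDeg (K : Type*) [Field K] [NumberField K] {q : ℕ}
    (hq : q.Prime) :
    ∑ P ∈ primesAbove K q, P.ramificationIdx ℤ * P.inertiaDeg ℤ =
      finrank ℚ K := by
  have : Fact q.Prime := ⟨hq⟩
  rw [← RingOfIntegers.rank, ← sum_ramification_inertia_eq_finrank (span {(q : ℤ)}) (𝓞 K)]
  exact Finset.sum_subtype _ (fun P => mem_primesAbove_iff hq) _

theorem eulerFactor_le_pow_finrank {q : ℕ} (hq : q.Prime) {s : ℝ} (hs : 0 < s) :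
    eulerFactor K q s ≤ (1 - (q : ℝ) ^ (-s))⁻¹ ^ finrank ℚ K := by
  have hx := rpow_neg_lt_one hq.one_lt hs
  have hx0 : 0 ≤ (q : ℝ) ^ (-s) := by positivity
  have hcard : (primesAbove K q).card ≤ finrank ℚ K := by
    rw [← sum_ramificationIdx_mul_inertiaDeg K hq, Finset.card_eq_sum_ones]
    refine Finset.sum_le_sum fun P hP => ?_
    obtain ⟨_, _⟩ := (mem_primesAbove_iff hq).mp hP
    exact Nat.mul_pos (ramificationIdx_pos P ℤ) (inertiaDeg_pos P ℤ)
  refine le_trans ?_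
    (pow_le_pow_right₀ ((one_le_inv₀ (sub_pos.mpr hx)).mpr (sub_le_self 1 hx0)) hcard)
  rw [← Finset.prod_const]
  refine Finset.prod_le_prod (fun P hP => inv_nonneg.mpr
    (sub_nonneg.mpr (absNormRpowNeg_lt_one hq hP hs).le)) fun P hP => ?_
  obtain ⟨_, _⟩ := (mem_primesAbove_iff hq).mp hP
  rw [absNormRpowNeg_of_liesOver (q := q)]
  exact inv_anti₀ (sub_pos.mpr hx) <| sub_le_sub_left
    (pow_le_of_le_one hx0 hx.le (inertiaDeg_pos P ℤ).ne') 1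

theorem eulerFactor_eq_of_cubic (hK : finrank ℚ K = 3) {q : ℕ} (hq : q.Prime)
    (hinert : ∀ P : Ideal (𝓞 K), absNorm P ≠ q) (s : ℝ) :
    eulerFactor K q s = (1 - ((q : ℝ) ^ (-s)) ^ 3)⁻¹ := by
  have hsum := (sum_ramificationIdx_mul_inertiaDeg K hq).trans hK
  have hdeg : ∀ P ∈ primesAbove K q,
      P.IsPrime ∧ P.LiesOver (span {(q : ℤ)}) ∧ 1 ≤ P.ramificationIdx ℤ ∧ 2 ≤ P.inertiaDeg ℤ := by
    intro P hP
    obtain ⟨hPprime, hPover⟩ := (mem_primesAbove_iff hq).mp hP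
    have hne : P.inertiaDeg ℤ ≠ 1 := fun h =>
      hinert P (by rw [← pow_inertiaDeg q P, h, pow_one])
    have hpos := inertiaDeg_pos P ℤ
    exact ⟨hPprime, hPover, ramificationIdx_pos P ℤ, by omega⟩
  have hcard : 2 * (primesAbove K q).card ≤ 3 := by
    rw [← hsum, mul_comm, ← smul_eq_mul]
    exact Finset.card_nsmul_le_sum _ _ _ fun P hP =>
      Nat.mul_le_mul (hdeg P hP).2.2.1 (hdeg P hP).2.2.2
  have hne : (primesAbove K q).card ≠ 0 := fun h => by
    simp [Finset.card_eq_zero.mp h] at hsum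
  obtain ⟨P, hP⟩ := Finset.card_eq_one.mp
    (show (primesAbove K q).card = 1 by omega)
  obtain ⟨_, _, -, hf⟩ := hdeg P (by rw [hP, Finset.mem_singleton])
  rw [hP, Finset.sum_singleton] at hsum
  have hf3 : P.inertiaDeg ℤ = 3 :=
    ((Nat.dvd_prime Nat.prime_three).mp ⟨_, by rw [mul_comm, hsum]⟩).resolve_left (by omega)
  rw [eulerFactor, hP, Finset.prod_singleton, absNormRpowNeg_of_liesOver (q := q), hf3]

theorem norm_one_sub_mul_ofReal_sq {c : ℂ} (hc : c ^ 3 = 1) (hc1 : c ≠ 1) (x : ℝ) :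
    ‖1 - c * x‖ ^ 2 = 1 + x + x ^ 2 := by
  have hnorm : ((‖1 - c * x‖ ^ 2 : ℝ) : ℂ) = (1 + x + x ^ 2 : ℝ) := by
    rw [← Complex.normSq_eq_norm_sq, ← Complex.mul_conj, map_sub, map_one, map_mul,
      Complex.conj_ofReal, conj_eq_sq_of_pow_three_eq_one hc]
    push_cast
    linear_combination (-(x : ℂ)) * sq_add_self_add_one_eq_zero hc hc1 + (x : ℂ) ^ 2 * hc
  exact_mod_cast hnorm

theorem norm_one_sub_natCast_cpow_inv {q : ℕ} (hq : 1 < q) {s : ℝ} (hs : 0 < s) :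
    ‖(1 - (q : ℂ) ^ (-(s : ℂ)))⁻¹‖ = (1 - (q : ℝ) ^ (-s))⁻¹ := by
  have hcast : (1 - (q : ℂ) ^ (-(s : ℂ)))⁻¹ = ((1 - (q : ℝ) ^ (-s))⁻¹ : ℝ) := by
    push_cast [Complex.ofReal_cpow (Nat.cast_nonneg q)]
    rfl
  rw [hcast, Complex.norm_of_nonneg (inv_nonneg.mpr (sub_nonneg.mpr (rpow_neg_lt_one hq hs).le))]

namespace IsSimplestCubicGenerator

variable {a : ℤ} {θ : 𝓞 K} (h : IsSimplestCubicGenerator a θ)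
include h

theorem exists_dvd_of_absNorm_eq {q : ℕ} (hq : q.Prime) {P : Ideal (𝓞 K)} (hP : absNorm P = q) :
    ∃ n : ℤ, (q : ℤ) ∣ n ^ 3 - a * n ^ 2 - (a + 3) * n - 1 := by
  have hcard : Nat.card (𝓞 K ⧸ P) = q := by
    rw [← hP, absNorm_apply, Submodule.cardQuot_apply]
  have : Finite (𝓞 K ⧸ P) := Nat.finite_of_card_ne_zero (hcard ▸ hq.ne_zero)
  have := Fintype.ofFinite (𝓞 K ⧸ P)
  let f : 𝓞 K →+* ZMod q :=
    ((ZMod.ringEquivOfPrime _ hq (Nat.card_eq_fintype_card.symm.trans hcard)).symm : _ →+* _).comp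
      (Ideal.Quotient.mk P)
  obtain ⟨n, hn⟩ := ZMod.intCast_surjective (f θ)
  refine ⟨n, (ZMod.intCast_zmod_eq_zero_iff_dvd _ q).mp ?_⟩
  push_cast
  rw [hn]
  simpa [_root_.map_ofNat f] using congrArg f h.root

variable {p : ℕ} [Fact p.Prime] (hpa : (p : ℤ) = a ^ 2 + 3 * a + 9) {t : ℤ} (ht : a + 1 = 3 * t)
include hpa ht

theorem eulerFactor_le {χ : MulChar (ZMod p) ℂ} (hχ : orderOf χ = 3) {q : ℕ} (hq : q.Prime)
    {s : ℝ} (hs : 0 < s) :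
    eulerFactor K q s ≤ (if q = p then (1 - (p : ℝ) ^ (-s))⁻¹ ^ 2 else 1) *
      (‖(1 - (q : ℂ) ^ (-(s : ℂ)))⁻¹‖ * ‖(1 - χ q * (q : ℂ) ^ (-(s : ℂ)))⁻¹‖ ^ 2) := by
  have hle := h.finrank_eq ▸ eulerFactor_le_pow_finrank (K := K) hq hs
  rcases eq_or_ne q p with rfl | hqp
  · rw [if_pos rfl, CharP.cast_eq_zero (ZMod q) q, MulChar.map_zero, zero_mul, sub_zero, inv_one,
      norm_one, one_pow, mul_one, norm_one_sub_natCast_cpow_inv hq.one_lt hs, ← pow_succ]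
    exact hle
  rw [if_neg hqp, one_mul, norm_one_sub_natCast_cpow_inv hq.one_lt hs]
  by_cases hχq : χ q = 1
  · rw [hχq, one_mul, norm_one_sub_natCast_cpow_inv hq.one_lt hs, ← pow_succ']
    exact hle
  have hinert (P : Ideal (𝓞 K)) (hP : absNorm P = q) : False :=
    have ⟨_, hn⟩ := h.exists_dvd_of_absNorm_eq hq hP
    hχq (cubicCharacter_eq_one_of_dvd hpa ht hχ hq hqp hn)
  have hq0 : (q : ZMod p) ≠ 0 := by
    rw [ne_eq, ZMod.natCast_eq_zero_iff, Nat.prime_dvd_prime_iff_eq Fact.out hq]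
    exact hqp.symm
  have hcast : (q : ℂ) ^ (-(s : ℂ)) = ((q : ℝ) ^ (-s) : ℝ) := by
    push_cast [Complex.ofReal_cpow (Nat.cast_nonneg q)]
    rfl
  rw [eulerFactor_eq_of_cubic h.finrank_eq hq hinert, hcast, norm_inv, inv_pow,
    norm_one_sub_mul_ofReal_sq (map_pow_three_of_ne_zero (hχ ▸ pow_orderOf_eq_one χ) hq0) hχq,
    ← mul_inv]
  exact (congrArg _ (by ring)).le

-- The first factor is the price of bounding the Euler factor at `p` crudely by that of `ζ ^ 3`.
theorem norm_dedekindZeta_le {χ : DirichletCharacter ℂ p} (hχ : orderOf χ = 3) {s : ℝ}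
    (hs : 1 < s) :
    ‖dedekindZeta K s‖ ≤ (1 - (p : ℝ) ^ (-s))⁻¹ ^ 2 *
      (‖riemannZeta s‖ * ‖LSeries (fun n => χ n) s‖ ^ 2) := by
  have hs0 := zero_lt_one.trans hs
  refine norm_dedekindZeta_le_of_eulerFactor_le hs0
    (fun q hq => h.eulerFactor_le hpa ht hχ hq hs0) ?_
  simp only [Finset.prod_mul_distrib, Finset.prod_pow, ← norm_prod]
  refine Tendsto.mul (tendsto_const_nhds.congr' ?_) <|
    (riemannZeta_eulerProduct (by simpa using hs)).norm.mul
      ((DirichletCharacter.LSeries_eulerProduct χ (by simpa using hs)).norm.pow 2)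
  filter_upwards [eventually_gt_atTop p] with M hM
  rw [Finset.prod_ite_eq', if_pos (Nat.mem_primesBelow.mpr ⟨hM, Fact.out⟩)]

end IsSimplestCubicGenerator

end EulerProduct

section DoubleAbelSummation

open Finset

/-- The sum of the partial sums of `a`, over which summation by parts is iterated twice. -/
def doubleSum {E : Type*} [AddCommMonoid E] (a : ℕ → E) (N : ℕ) : E :=
  ∑ n ∈ range N, ∑ m ∈ range (n + 1), a m

theorem doubleSum_succ {E : Type*} [AddCommMonoid E] (a : ℕ → E) (N : ℕ) :
    doubleSum a (N + 1) = doubleSum a N + ∑ m ∈ range (N + 1), a m :=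
  sum_range_succ _ _

theorem sum_smul_eq_doubleSum {R E : Type*} [CommRing R] [AddCommGroup E] [Module R E]
    (g : ℕ → R) (a : ℕ → E) (X : ℕ) :
    ∑ n ∈ range X, g n • a n =
      g X • ∑ n ∈ range X, a n + (g X - g (X + 1)) • doubleSum a X +
        ∑ n ∈ range X, (g n - 2 * g (n + 1) + g (n + 2)) • doubleSum a (n + 1) := by
  induction X with
  | zero => simp [doubleSum]
  | succ X ih =>
    rw [doubleSum_succ a X]
    simp only [sum_range_succ _ X, ih]
    rw [doubleSum_succ a X, sum_range_succ a]
    module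

theorem natCast_mul_add_sum_mul_secondDifference {R : Type*} [CommRing R] (g : ℕ → R) (X : ℕ) :
    X * (g X - g (X + 1)) + ∑ n ∈ range X, ((n : R) + 1) * (g n - 2 * g (n + 1) + g (n + 2)) =
      g 0 - g X := by
  induction X with
  | zero => simp
  | succ X ih =>
    rw [sum_range_succ]
    push_cast
    linear_combination ih

theorem norm_sum_smul_le_of_convex {E : Type*} [NormedAddCommGroup E] [NormedSpace ℝ E]
    {a : ℕ → E} {g : ℕ → ℝ} {C : ℝ} (hC : ∀ n, ‖doubleSum a n‖ ≤ C * n) (hC0 : 0 ≤ C)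
    (hg : ∀ n, 0 ≤ g n) (hanti : ∀ n, g (n + 1) ≤ g n)
    (hconv : ∀ n, 2 * g (n + 1) ≤ g n + g (n + 2)) (X : ℕ) :
    ‖∑ n ∈ range X, g n • a n‖ ≤ g X * ‖∑ n ∈ range X, a n‖ + C * g 0 := by
  have hΔ := sub_nonneg.mpr (hanti X)
  have hΔ2 (n : ℕ) : 0 ≤ g n - 2 * g (n + 1) + g (n + 2) := by linarith [hconv n]
  have hsum : ‖∑ n ∈ range X, (g n - 2 * g (n + 1) + g (n + 2)) • doubleSum a (n + 1)‖ ≤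
      C * ∑ n ∈ range X, ((n : ℝ) + 1) * (g n - 2 * g (n + 1) + g (n + 2)) := by
    rw [mul_sum]
    refine (norm_sum_le _ _).trans (sum_le_sum fun n _ => ?_)
    rw [norm_smul, Real.norm_of_nonneg (hΔ2 n), mul_comm, ← mul_assoc]
    exact mul_le_mul_of_nonneg_right (by exact_mod_cast hC (n + 1)) (hΔ2 n)
  rw [sum_smul_eq_doubleSum]
  calc
    _ ≤ g X * ‖∑ n ∈ range X, a n‖ + (g X - g (X + 1)) * ‖doubleSum a X‖ +
        C * ∑ n ∈ range X, ((n : ℝ) + 1) * (g n - 2 * g (n + 1) + g (n + 2)) := by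
      refine norm_add₃_le.trans (add_le_add (add_le_add ?_ ?_) hsum)
      · rw [norm_smul, Real.norm_of_nonneg (hg X)]
      · rw [norm_smul, Real.norm_of_nonneg hΔ]
    _ ≤ g X * ‖∑ n ∈ range X, a n‖ + (g X - g (X + 1)) * (C * X) +
        C * ∑ n ∈ range X, ((n : ℝ) + 1) * (g n - 2 * g (n + 1) + g (n + 2)) := by
      gcongr
      exact hC X
    _ = g X * ‖∑ n ∈ range X, a n‖ + C * (g 0 - g X) := by
      rw [← natCast_mul_add_sum_mul_secondDifference g X]
      ring
    _ ≤ g X * ‖∑ n ∈ range X, a n‖ + C * g 0 := by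
      gcongr
      exact sub_le_self _ (hg X)

end DoubleAbelSummation

section TangentWeight

theorem rpow_neg_mul_tangent_le {x y s : ℝ} (hx : 0 < x) (hy : 0 < y) (hs : 0 < s) :
    x ^ (-s) * (1 + s * (x - y) / x) ≤ y ^ (-s) := by
  have hlog := Real.log_le_sub_one_of_pos (div_pos hy hx)
  have hexp := Real.add_one_le_exp (Real.log (y / x) * -s)
  calc x ^ (-s) * (1 + s * (x - y) / x)
    _ = x ^ (-s) * (1 - s * (y / x - 1)) := by
      field_simp
      ring
    _ ≤ x ^ (-s) * (y / x) ^ (-s) := by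
      rw [Real.rpow_def_of_pos (div_pos hy hx)]
      gcongr
      nlinarith
    _ = y ^ (-s) := by rw [← Real.mul_rpow hx.le (div_pos hy hx).le, mul_div_cancel₀ _ hx.ne']

/-- The value at `n` of the tangent to `x ↦ x ^ (-s)` at `M`. -/
noncomputable def rpowTangent (M : ℕ) (s : ℝ) (n : ℕ) : ℝ :=
  (M : ℝ) ^ (-s) * (1 + s * (M - n) / M)

/-- The sequence `n ^ (-s)`, replaced by its tangent at `M` for `n < M`, which keeps it convex
while making its value at `0` as small as possible. -/
noncomputable def tangentWeight (M : ℕ) (s : ℝ) (n : ℕ) : ℝ :=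
  if M ≤ n then (n : ℝ) ^ (-s) else rpowTangent M s n

variable {M n : ℕ} {s : ℝ}

theorem tangentWeight_of_ge (h : M ≤ n) : tangentWeight M s n = (n : ℝ) ^ (-s) := if_pos h

theorem tangentWeight_of_le (h : n ≤ M) : tangentWeight M s n = rpowTangent M s n := by
  rcases h.eq_or_lt with rfl | h
  · simp [tangentWeight, rpowTangent]
  · exact if_neg h.not_ge

variable (hM : 0 < M) (hs : 0 < s)
include hM hs

theorem rpowTangent_le_tangentWeight (hn : 0 < n) : rpowTangent M s n ≤ tangentWeight M s n := by
  rcases le_total n M with h | h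
  · rw [tangentWeight_of_le h]
  · rw [tangentWeight_of_ge h]
    exact rpow_neg_mul_tangent_le (by positivity) (by positivity) hs

theorem tangentWeight_nonneg (n : ℕ) : 0 ≤ tangentWeight M s n := by
  rcases le_total n M with h | h
  · have hn : (0 : ℝ) ≤ M - n := sub_nonneg.mpr (by exact_mod_cast h)
    rw [tangentWeight_of_le h, rpowTangent]
    positivity
  · rw [tangentWeight_of_ge h]
    positivity

theorem tangentWeight_succ_le (n : ℕ) : tangentWeight M s (n + 1) ≤ tangentWeight M s n := by
  rcases Nat.lt_or_ge n M with h | h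
  · rw [tangentWeight_of_le h, tangentWeight_of_le h.le, rpowTangent, rpowTangent]
    gcongr
    exact n.le_succ
  · rw [tangentWeight_of_ge h, tangentWeight_of_ge (by omega)]
    exact Real.rpow_le_rpow_of_nonpos (by exact_mod_cast hM.trans_le h)
      (by exact_mod_cast n.le_succ) (neg_nonpos.mpr hs.le)

theorem two_mul_tangentWeight_succ_le (n : ℕ) :
    2 * tangentWeight M s (n + 1) ≤ tangentWeight M s n + tangentWeight M s (n + 2) := by
  rcases Nat.lt_or_ge n M with h | h
  · refine le_trans (le_of_eq ?_)
      (add_le_add_right (rpowTangent_le_tangentWeight hM hs (n + 1).succ_pos) _)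
    rw [tangentWeight_of_le h, tangentWeight_of_le h.le]
    simp only [rpowTangent]
    push_cast
    ring
  · rw [tangentWeight_of_ge h, tangentWeight_of_ge (by omega), tangentWeight_of_ge (by omega)]
    have hn : (0 : ℝ) < n := by exact_mod_cast hM.trans_le h
    refine le_trans (le_of_eq ?_) <| add_le_add
      (rpow_neg_mul_tangent_le (x := (n + 1 : ℕ)) (by positivity) hn hs)
      (rpow_neg_mul_tangent_le (x := (n + 1 : ℕ)) (y := (n + 2 : ℕ)) (by positivity)
        (by positivity) hs)
    push_cast
    ring

end TangentWeight

section FejerBound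

open Finset

variable {p : ℕ} [Fact p.Prime]

/-- The exponential sum `∑ j < N, e(x j / p)`. -/
noncomputable def exponentialSum (N : ℕ) (x : ZMod p) : ℂ :=
  ∑ j ∈ range N, ZMod.stdAddChar (x * j : ZMod p)

theorem exponentialSum_mod (N : ℕ) {x : ZMod p} (hx : x ≠ 0) :
    exponentialSum (N % p) x = exponentialSum N x := by
  have hgeom (N : ℕ) : exponentialSum N x * (ZMod.stdAddChar x - 1) =
      ZMod.stdAddChar (x * N : ZMod p) - 1 := by
    have hpow (n : ℕ) : ZMod.stdAddChar (x * n : ZMod p) = ZMod.stdAddChar x ^ n := by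
      rw [← AddChar.map_nsmul_eq_pow, nsmul_eq_mul, mul_comm]
    simp only [exponentialSum, hpow]
    exact geom_sum_mul _ _
  have hne : ZMod.stdAddChar x - 1 ≠ 0 := fun h => hx <| ZMod.injective_stdAddChar <| by
    rw [sub_eq_zero.mp h, AddChar.map_zero_eq_one]
  exact mul_right_cancel₀ hne (by rw [hgeom, hgeom, ZMod.natCast_mod])

theorem norm_exponentialSum_sq (N : ℕ) (x : ZMod p) :
    ((‖exponentialSum N x‖ ^ 2 : ℝ) : ℂ) =
      ∑ i ∈ range N, ∑ j ∈ range N, ZMod.stdAddChar (x * (i - j) : ZMod p) := by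
  rw [← Complex.normSq_eq_norm_sq, ← Complex.mul_conj, exponentialSum, map_sum, sum_mul_sum]
  simp only [← AddChar.map_neg_eq_conj, ← AddChar.map_add_eq_mul, sub_eq_add_neg,
    mul_add, mul_neg]

theorem sum_norm_exponentialSum_sq {N : ℕ} (hN : N ≤ p) :
    ∑ x : ZMod p, ‖exponentialSum N x‖ ^ 2 = p * N := by
  have horth : ∀ i ∈ range N, ∀ j ∈ range N,
      ∑ x : ZMod p, ZMod.stdAddChar (x * (i - j) : ZMod p) = if i = j then (p : ℂ) else 0 := by
    intro i hi j hj
    have hiff : (i : ZMod p) - j = 0 ↔ i = j := by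
      rw [sub_eq_zero, ZMod.natCast_eq_natCast_iff',
        Nat.mod_eq_of_lt ((mem_range.mp hi).trans_le hN),
        Nat.mod_eq_of_lt ((mem_range.mp hj).trans_le hN)]
    rw [AddChar.sum_mulShift _ (ZMod.isPrimitive_stdAddChar p), ZMod.card, Nat.cast_ite,
      Nat.cast_zero]
    simp only [hiff]
  have hcomplex : ((∑ x : ZMod p, ‖exponentialSum N x‖ ^ 2 : ℝ) : ℂ) = (p * N : ℝ) := by
    rw [Complex.ofReal_sum]
    simp only [norm_exponentialSum_sq]
    rw [sum_comm]
    calc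
      _ = ∑ i ∈ range N, ∑ j ∈ range N, if i = j then (p : ℂ) else 0 :=
        sum_congr rfl fun _ hi => by rw [sum_comm, sum_congr rfl (horth _ hi)]
      _ = ∑ _i ∈ range N, (p : ℂ) := sum_congr rfl fun i hi => by rw [sum_ite_eq, if_pos hi]
      _ = (p * N : ℝ) := by simp [mul_comm]
  exact_mod_cast hcomplex

theorem sum_erase_norm_exponentialSum_sq_le (N : ℕ) :
    ∑ x ∈ univ.erase (0 : ZMod p), ‖exponentialSum N x‖ ^ 2 ≤ p * N :=
  calc ∑ x ∈ univ.erase (0 : ZMod p), ‖exponentialSum N x‖ ^ 2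
    _ = ∑ x ∈ univ.erase (0 : ZMod p), ‖exponentialSum (N % p) x‖ ^ 2 :=
      sum_congr rfl fun x hx => by rw [exponentialSum_mod N (ne_of_mem_erase hx)]
    _ ≤ ∑ x : ZMod p, ‖exponentialSum (N % p) x‖ ^ 2 :=
      sum_le_sum_of_subset_of_nonneg (erase_subset _ _) fun _ _ _ => by positivity
    _ = p * (N % p : ℕ) := sum_norm_exponentialSum_sq (Nat.mod_lt _ (NeZero.pos p)).le
    _ ≤ p * N := by
      gcongr
      exact Nat.mod_le _ _

variable {χ : DirichletCharacter ℂ p}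

theorem sum_sum_sub_eq_two_mul_doubleSum (heven : χ.Even) (N : ℕ) :
    ∑ i ∈ range N, ∑ j ∈ range N, χ ((i : ZMod p) - j) = 2 * doubleSum (fun n => χ n) N := by
  have hzero : χ (0 : ZMod p) = 0 := MulChar.map_zero χ
  have hrow (N : ℕ) : ∑ j ∈ range N, χ ((N : ZMod p) - j) = ∑ j ∈ range (N + 1), χ j := by
    rw [sum_range_succ', Nat.cast_zero, hzero, add_zero, ← sum_range_reflect]
    refine sum_congr rfl fun j hj => congrArg χ ?_
    rw [sub_eq_iff_eq_add, ← Nat.cast_add]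
    congr 1
    have := mem_range.mp hj
    omega
  have hcolumn (N : ℕ) : ∑ j ∈ range N, χ ((j : ZMod p) - N) = ∑ j ∈ range (N + 1), χ j := by
    rw [← hrow]
    exact sum_congr rfl fun j _ => by rw [← neg_sub, heven.eval_neg]
  induction N with
  | zero => simp [doubleSum]
  | succ N ih =>
    simp only [sum_range_succ (fun j => χ (_ - ((j : ℕ) : ZMod p)))]
    rw [sum_range_succ, sum_add_distrib, ih, hrow, hcolumn, sub_self, hzero,
      doubleSum_succ]
    ring

theorem sum_inv_mul_stdAddChar (hχ : χ ≠ 1) (b : ZMod p) :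
    ∑ x : ZMod p, χ⁻¹ x * ZMod.stdAddChar (x * b) = χ b * gaussSum χ⁻¹ ZMod.stdAddChar := by
  rcases eq_or_ne b 0 with rfl | hb
  · simp only [mul_zero, AddChar.map_zero_eq_one, mul_one, MulChar.map_zero χ, zero_mul]
    exact MulChar.sum_eq_zero_of_ne_one (inv_ne_one.mpr hχ)
  · have hshift := gaussSum_mulShift_eq χ⁻¹ (ZMod.stdAddChar (N := p)) (Units.mk0 b hb)
    rw [inv_inv, Units.val_mk0] at hshift
    rw [← hshift, gaussSum]
    simp only [AddChar.mulShift_apply, mul_comm b]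

theorem norm_gaussSum (hχ : χ ≠ 1) : ‖gaussSum χ ZMod.stdAddChar‖ = √p := by
  have hprod := gaussSum_mul_gaussSum_eq_card hχ (ZMod.isPrimitive_stdAddChar p)
  rw [← star_gaussSum_eq] at hprod
  have hnorm := congrArg norm hprod
  rw [norm_mul, norm_star, ZMod.card, Complex.norm_natCast] at hnorm
  exact (Real.sqrt_eq_iff_mul_self_eq (Nat.cast_nonneg p) (norm_nonneg _)).mpr hnorm.symm |>.symm

theorem norm_doubleSum_le (hχ : χ ≠ 1) (heven : χ.Even) (N : ℕ) :
    ‖doubleSum (fun n => χ n) N‖ ≤ √p / 2 * N := by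
  have hgauss : 2 * doubleSum (fun n => χ n) N * gaussSum χ⁻¹ ZMod.stdAddChar =
      ∑ x : ZMod p, χ⁻¹ x * ((‖exponentialSum N x‖ ^ 2 : ℝ) : ℂ) := by
    rw [← sum_sum_sub_eq_two_mul_doubleSum heven]
    simp only [norm_exponentialSum_sq, mul_sum, sum_mul, ← sum_inv_mul_stdAddChar hχ]
    rw [sum_comm (s := univ)]
    exact sum_congr rfl fun i _ => sum_comm
  have hle : ‖∑ x : ZMod p, χ⁻¹ x * ((‖exponentialSum N x‖ ^ 2 : ℝ) : ℂ)‖ ≤ p * N := by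
    refine le_trans ?_ (sum_erase_norm_exponentialSum_sq_le (p := p) N)
    rw [← add_sum_erase _ _ (mem_univ (0 : ZMod p)), MulChar.map_zero χ⁻¹, zero_mul, zero_add]
    refine (norm_sum_le _ _).trans (sum_le_sum fun x _ => ?_)
    rw [norm_mul, Complex.norm_of_nonneg (by positivity)]
    exact mul_le_of_le_one_left (by positivity) (DirichletCharacter.norm_le_one _ _)
  rw [← hgauss, norm_mul, norm_mul, norm_gaussSum (inv_ne_one.mpr hχ), Complex.norm_ofNat] at hle
  have hp : 0 < √(p : ℝ) := Real.sqrt_pos.mpr (Nat.cast_pos.mpr (NeZero.pos p))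
  have hsq := Real.mul_self_sqrt (Nat.cast_nonneg (α := ℝ) p)
  refine le_of_mul_le_mul_right ?_ hp
  linear_combination (hle - N * hsq) / 2

end FejerBound

section LValueBound

open Finset Filter Topology

theorem sum_rpow_smul_eq {E : Type*} [AddCommGroup E] [Module ℝ E] (a : ℕ → E) {M X : ℕ}
    (hMX : M ≤ X) (s : ℝ) :
    ∑ n ∈ range X, (n : ℝ) ^ (-s) • a n =
      ∑ n ∈ range M, ((n : ℝ) ^ (-s) - rpowTangent M s n) • a n +
        ∑ n ∈ range X, tangentWeight M s n • a n := by
  rw [← sub_eq_iff_eq_add, ← sum_sub_distrib]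
  simp only [← sub_smul]
  rw [← sum_subset (range_mono hMX) fun n _ hn => by
    rw [tangentWeight_of_ge (not_lt.mp (mt mem_range.mpr hn)), sub_self, zero_smul]]
  exact sum_congr rfl fun n hn => by rw [tangentWeight_of_le (mem_range.mp hn).le]

variable {p : ℕ} [Fact p.Prime] {χ : DirichletCharacter ℂ p} {M : ℕ}

theorem term_LSeries_eq_smul (χ : DirichletCharacter ℂ p) (s : ℝ) (n : ℕ) :
    LSeries.term (fun n => χ n) s n = (n : ℝ) ^ (-s) • χ n := by
  rcases eq_or_ne n 0 with rfl | hn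
  · rw [LSeries.term_zero, Nat.cast_zero, Nat.cast_zero, MulChar.map_zero χ, smul_zero]
  · rw [LSeries.term_of_ne_zero hn, Complex.real_smul, Complex.ofReal_cpow (Nat.cast_nonneg n),
      div_eq_inv_mul, ← Complex.cpow_neg]
    push_cast
    rfl

theorem norm_sum_rpow_smul_le (hχ : χ ≠ 1) (heven : χ.Even) (hM : 0 < M) {X : ℕ} (hMX : M ≤ X)
    {s : ℝ} (hs : 0 < s) :
    ‖∑ n ∈ range X, (n : ℝ) ^ (-s) • χ n‖ ≤
      ‖∑ n ∈ range M, ((n : ℝ) ^ (-s) - rpowTangent M s n) • χ n‖ +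
        ((X : ℝ) ^ (1 - s) + √p / 2 * rpowTangent M s 0) := by
  have hpartial : ‖∑ n ∈ range X, χ n‖ ≤ X :=
    calc ‖∑ n ∈ range X, χ n‖ ≤ ∑ n ∈ range X, ‖χ n‖ := norm_sum_le _ _
      _ ≤ ∑ _n ∈ range X, (1 : ℝ) := sum_le_sum fun n _ => χ.norm_le_one n
      _ = X := by rw [sum_const, card_range, nsmul_one]
  have hconvex := norm_sum_smul_le_of_convex (norm_doubleSum_le hχ heven) (by positivity)
    (tangentWeight_nonneg hM hs) (tangentWeight_succ_le hM hs)
    (two_mul_tangentWeight_succ_le hM hs) X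
  rw [tangentWeight_of_ge hMX, tangentWeight_of_le M.zero_le] at hconvex
  have hpow : (X : ℝ) ^ (-s) * X = (X : ℝ) ^ (1 - s) := by
    rw [← Real.rpow_add_one (Nat.cast_ne_zero.mpr (hM.trans_le hMX).ne'), neg_add_eq_sub]
  rw [sum_rpow_smul_eq _ hMX, ← hpow]
  refine (norm_add_le _ _).trans (add_le_add_right (hconvex.trans ?_) _)
  gcongr

theorem norm_LSeries_le (hχ : χ ≠ 1) (heven : χ.Even) (hM : 0 < M) {s : ℝ} (hs : 1 < s) :
    ‖LSeries (fun n => χ n) s‖ ≤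
      ‖∑ n ∈ range M, ((n : ℝ) ^ (-s) - rpowTangent M s n) • χ n‖ +
        √p / 2 * rpowTangent M s 0 := by
  have hsum := DirichletCharacter.LSeriesSummable_of_one_lt_re χ (s := s) (by simpa using hs)
  have hX : Tendsto (fun X : ℕ => (X : ℝ) ^ (1 - s)) atTop (𝓝 0) := by
    simpa only [neg_sub, Function.comp_def] using
      (tendsto_rpow_neg_atTop (sub_pos.mpr hs)).comp tendsto_natCast_atTop_atTop
  have hbound := (hX.add_const (√p / 2 * rpowTangent M s 0)).const_add
    ‖∑ n ∈ range M, ((n : ℝ) ^ (-s) - rpowTangent M s n) • χ n‖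
  rw [zero_add] at hbound
  refine le_of_tendsto_of_tendsto hsum.hasSum.tendsto_sum_nat.norm hbound ?_
  filter_upwards [eventually_ge_atTop M] with X hMX
  simp only [term_LSeries_eq_smul]
  exact norm_sum_rpow_smul_le hχ heven hM hMX (zero_lt_one.trans hs)

theorem tendsto_norm_LSeries_one (hχ : χ ≠ 1) :
    Tendsto (fun s : ℝ => ‖LSeries (fun n => χ n) s‖) (𝓝[>] 1) (𝓝 ‖χ.LFunction 1‖) := by
  have hcont := (DirichletCharacter.differentiable_LFunction hχ).continuous.comp
    Complex.continuous_ofReal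
  refine ((hcont.norm.tendsto' 1 _ (by simp)).mono_left nhdsWithin_le_nhds).congr' ?_
  filter_upwards [self_mem_nhdsWithin] with s hs
  exact congrArg norm (χ.LFunction_eq_LSeries (by simpa using hs))

theorem tendsto_rpow_sub_rpowTangent_smul (χ : DirichletCharacter ℂ p) (hM : 0 < M) (n : ℕ) :
    Tendsto (fun s : ℝ => ((n : ℝ) ^ (-s) - rpowTangent M s n) • χ n) (𝓝 1)
      (𝓝 ((((M - n) ^ 2 / n : ℝ) / M ^ 2) • χ n)) := by
  rcases eq_or_ne n 0 with rfl | hn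
  · simp [MulChar.map_zero χ]
  have hM0 : (M : ℝ) ≠ 0 := by positivity
  have hn0 : (n : ℝ) ≠ 0 := by exact_mod_cast hn
  have hcont : ContinuousAt (fun s : ℝ => ((n : ℝ) ^ (-s) - rpowTangent M s n) • χ n) 1 := by
    unfold rpowTangent
    fun_prop (disch := simp [hM0, hn0])
  convert hcont.tendsto using 3
  rw [rpowTangent, Real.rpow_neg_one, Real.rpow_neg_one]
  field_simp
  ring

theorem norm_LFunction_one_le (hχ : χ ≠ 1) (heven : χ.Even) (hM : 0 < M) :
    ‖χ.LFunction 1‖ ≤ ‖∑ n ∈ range M, ((M - n) ^ 2 / n : ℝ) • χ n‖ / M ^ 2 + √p / M := by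
  have hM0 : (M : ℝ) ≠ 0 := by positivity
  have htail : Tendsto (fun s : ℝ => √p / 2 * rpowTangent M s 0) (𝓝 1) (𝓝 (√p / M)) := by
    have hcont : ContinuousAt (fun s : ℝ => √p / 2 * rpowTangent M s 0) 1 := by
      unfold rpowTangent
      fun_prop (disch := simp [hM0])
    convert hcont.tendsto using 2
    rw [rpowTangent, Real.rpow_neg_one]
    field_simp
    ring
  have hsum := tendsto_finsetSum (range M) fun n _ => tendsto_rpow_sub_rpowTangent_smul χ hM n
  refine (le_of_tendsto_of_tendsto (tendsto_norm_LSeries_one hχ)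
    ((hsum.norm.add htail).mono_left nhdsWithin_le_nhds) ?_).trans_eq ?_
  · filter_upwards [self_mem_nhdsWithin] with s hs
    exact norm_LSeries_le hχ heven hM hs
  · simp only [div_eq_inv_mul _ ((M : ℝ) ^ 2), mul_smul, ← smul_sum]
    rw [norm_smul, Real.norm_of_nonneg (by positivity)]

end LValueBound

section KernelSums

open Finset

/-- `∑ n < N, f n` as a bare recursion, which the kernel can evaluate. -/
def recSum (f : ℕ → ℕ) (N : ℕ) : ℕ :=
  N.rec 0 fun n s => s.add (f n)

theorem recSum_eq (f : ℕ → ℕ) (N : ℕ) : recSum f N = ∑ n ∈ range N, f n := by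
  induction N with
  | zero => rfl
  | succ N ih => rw [sum_range_succ, ← ih]; rfl

-- Splitting a sum into blocks keeps the recursion depth of its evaluation near `a + b`.
theorem recSum_recSum_eq (f : ℕ → ℕ) (a b : ℕ) :
    recSum (fun i => recSum (fun j => f ((a.mul i).add j)) a) b = ∑ n ∈ range (a * b), f n := by
  rw [recSum_eq]
  induction b with
  | zero => rfl
  | succ b ih => rw [sum_range_succ, ih, recSum_eq, Nat.mul_succ, sum_range_add]; rfl

theorem sum_cast_mul_pow_eq {ι R : Type*} [CommSemiring R] {s : Finset ι} {W k : ι → ℕ} {m : ℕ}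
    (hk : ∀ n ∈ s, k n < m) (x : R) :
    ∑ n ∈ s, (W n : R) * x ^ k n =
      ∑ j ∈ range m, ((∑ n ∈ s with k n = j, W n : ℕ) : R) * x ^ j := by
  rw [← sum_fiberwise_of_maps_to fun n hn => mem_range.mpr (hk n hn)]
  refine sum_congr rfl fun j _ => ?_
  rw [Nat.cast_sum, sum_mul]
  exact sum_congr rfl fun n hn => by rw [(mem_filter.mp hn).2]

theorem eq_and_eq_and_eq_of_add_mul_add_mul_sq_eq {B x y z a b c : ℕ} (hx : x < B) (hy : y < B)
    (ha : a < B) (hb : b < B) (h : x + y * B + z * B ^ 2 = a + b * B + c * B ^ 2) :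
    x = a ∧ y = b ∧ z = c := by
  have hB : 0 < B := by omega
  have h' : x + B * (y + B * z) = a + B * (b + B * c) := by linarith
  have hxa : x = a := by
    simpa [Nat.mod_eq_of_lt, hx, ha] using congrArg (· % B) h'
  have hyz : y + B * z = b + B * c := by
    rw [hxa] at h'
    exact Nat.eq_of_mul_eq_mul_left hB (Nat.add_left_cancel h')
  have hyb : y = b := by
    simpa [Nat.mod_eq_of_lt, hy, hb] using congrArg (· % B) hyz
  rw [hyb] at hyz
  exact ⟨hxa, hyb, Nat.eq_of_mul_eq_mul_left hB (Nat.add_left_cancel hyz)⟩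

theorem sum_filter_eq_of_sum_mul_pow_eq {ι : Type*} {s : Finset ι} {W k : ι → ℕ} {B a b c : ℕ}
    (hk : ∀ n ∈ s, k n < 3) (hW : ∑ n ∈ s, W n < B) (ha : a < B) (hb : b < B)
    (h : ∑ n ∈ s, W n * B ^ k n = a + b * B + c * B ^ 2) :
    (∑ n ∈ s with k n = 0, W n) = a ∧ (∑ n ∈ s with k n = 1, W n) = b ∧
      (∑ n ∈ s with k n = 2, W n) = c := by
  have hlt (j : ℕ) : ∑ n ∈ s with k n = j, W n < B :=
    (sum_le_sum_of_subset (filter_subset _ _)).trans_lt hW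
  refine eq_and_eq_and_eq_of_add_mul_add_mul_sq_eq (hlt 0) (hlt 1) ha hb (h ▸ ?_)
  simpa [sum_range_succ] using (sum_cast_mul_pow_eq hk B).symm

end KernelSums

section NumericalLValue

open Finset

theorem even_of_orderOf_eq_three {p : ℕ} [Fact p.Prime] {χ : DirichletCharacter ℂ p}
    (hχ : orderOf χ = 3) : χ.Even := by
  have hcube : χ (-1) ^ 3 = 1 :=
    map_pow_three_of_ne_zero (hχ ▸ pow_orderOf_eq_one χ) (neg_ne_zero.mpr one_ne_zero)
  have hsq : χ (-1) ^ 2 = 1 := by rw [← map_pow, neg_one_sq, map_one]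
  rwa [pow_succ, hsq, one_mul] at hcube

theorem norm_add_mul_add_mul_sq_sq {c : ℂ} (hc : c ^ 3 = 1) (hc1 : c ≠ 1) (x y z : ℝ) :
    ‖x + y * c + z * c ^ 2‖ ^ 2 = x ^ 2 + y ^ 2 + z ^ 2 - x * y - y * z - z * x := by
  have hquad := sq_add_self_add_one_eq_zero hc hc1
  have hconj := conj_eq_sq_of_pow_three_eq_one hc
  rw [← Complex.ofReal_inj, Complex.ofReal_pow, ← Complex.mul_conj']
  simp only [map_add, map_mul, map_pow, Complex.conj_ofReal, hconj]
  push_cast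
  linear_combination (y ^ 2 + z ^ 2 * (c ^ 3 + 1) + x * z * c + y * z * (c ^ 2 + c)) * hc +
    (x * y + y * z + z * x) * hquad

/-- `n ^ 99538562 mod 298615687`, where `99538562 = (298615687 - 1) / 3`, by base 128 Horner
steps written with the operations of `ℕ` that the kernel evaluates natively. -/
def cubicResidue (n : ℕ) : ℕ :=
  n.pow 47 |>.mod 298615687 |>.pow 128 |>.mul (n.pow 59) |>.mod 298615687
    |>.pow 128 |>.mul (n.pow 45) |>.mod 298615687 |>.pow 128 |>.mul (n.pow 2) |>.mod 298615687

theorem cubicResidue_eq (n : ℕ) : cubicResidue n = n ^ 99538562 % 298615687 := by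
  have hhorner : ((((n ^ 47 % 298615687) ^ 128 * n ^ 59 % 298615687) ^ 128 * n ^ 45
      % 298615687) ^ 128 * n ^ 2) ≡ (((n ^ 47) ^ 128 * n ^ 59) ^ 128 * n ^ 45) ^ 128 * n ^ 2
        [MOD 298615687] :=
    .mul_right _ <| .pow _ <| (Nat.mod_modEq _ _).trans <| .mul_right _ <| .pow _ <|
      (Nat.mod_modEq _ _).trans <| .mul_right _ <| .pow _ <| Nat.mod_modEq _ _
  refine hhorner.trans (congrArg (· % 298615687) ?_)
  simp only [← pow_mul, ← pow_add]

/-- The index of `n` in `{0, 1, 2}` recording its cubic residue class modulo `298615687`; the cube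
roots of unity `1`, `99544322` and `199071364` are `1`, `2` and `0` modulo `4`. -/
def cubicClass (n : ℕ) : ℕ :=
  (cubicResidue n).mod 4

/-- The weights `(M - n)² / n` for `M = 78400`, rounded down. -/
def roundedWeight (n : ℕ) : ℕ :=
  ((Nat.sub 78400 n).pow 2).div n

-- The three sums over the cubic classes are packed into one number in base `2 ^ 64`.
theorem sum_roundedWeight_mul_pow_cubicClass :
    ∑ n ∈ range 78400, roundedWeight n * (2 ^ 64) ^ cubicClass n =
      21287095375 + 23243657714 * 2 ^ 64 + 19066481796 * (2 ^ 64) ^ 2 := by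
  refine (recSum_recSum_eq (fun n => (roundedWeight n).mul ((Nat.pow 2 64).pow (cubicClass n)))
    280 280).symm.trans ?_
  decide +kernel

section

local instance : Fact (Nat.Prime 298615687) := ⟨prime_298615687⟩

variable {χ : DirichletCharacter ℂ 298615687}

theorem map_eq_map_of_pow_eq_pow (hχ : χ ^ 3 = 1) {x y : ZMod 298615687} (hx : x ≠ 0) (hy : y ≠ 0)
    (hxy : x ^ 99538562 = y ^ 99538562) : χ x = χ y := by
  have hsq : ∀ {z : ZMod 298615687}, z ≠ 0 → χ (z ^ 99538562) ^ 2 = χ z := fun {z} hz => by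
    rw [map_pow, ← pow_mul, show 99538562 * 2 = 3 * 66359041 + 1 from rfl, pow_succ, pow_mul,
      map_pow_three_of_ne_zero hχ hz, one_pow, one_mul]
  rw [← hsq hx, ← hsq hy, hxy]

theorem natCast_ne_zero_of_lt {n : ℕ} (h0 : n ≠ 0) (hn : n < 78400) :
    (n : ZMod 298615687) ≠ 0 := by
  rw [Ne, ZMod.natCast_eq_zero_iff]
  exact fun h => absurd (Nat.le_of_dvd (Nat.pos_of_ne_zero h0) h) (by omega)

theorem exists_three_pow_pow_eq {x : ZMod 298615687} (hx : x ≠ 0) :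
    ∃ i < 3, ((3 : ZMod 298615687) ^ i) ^ 99538562 = x ^ 99538562 := by
  have hcube : (x ^ 99538562) ^ 3 = 1 := by
    rw [← pow_mul]
    exact ZMod.pow_card_sub_one_eq_one hx
  have hprim : IsPrimitiveRoot ((3 : ZMod 298615687) ^ 99538562) 3 := by
    rw [IsPrimitiveRoot.iff_orderOf]
    exact orderOf_eq_prime (by reduce_mod_char) (by reduce_mod_char; decide)
  obtain ⟨i, hi, h⟩ := hprim.eq_pow_of_pow_eq_one hcube
  exact ⟨i, hi, by rw [pow_right_comm, h]⟩

theorem cubicClass_eq {n i : ℕ}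
    (h : ((3 : ZMod 298615687) ^ i) ^ 99538562 = (n : ZMod 298615687) ^ 99538562) :
    cubicClass n = (99544322 ^ i % 298615687).mod 4 := by
  have hroot : (3 : ZMod 298615687) ^ 99538562 = 99544322 := by reduce_mod_char
  have hres : cubicResidue n = 99544322 ^ i % 298615687 := by
    rw [cubicResidue_eq, ← ZMod.natCast_eq_natCast_iff', Nat.cast_pow, ← h, pow_right_comm, hroot,
      Nat.cast_pow, Nat.cast_ofNat]
  rw [cubicClass, hres]

theorem cubicClass_lt_three {n : ℕ} (hn : n < 78400) : cubicClass n < 3 := by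
  rcases eq_or_ne n 0 with rfl | h0
  · decide
  · obtain ⟨i, hi, h⟩ := exists_three_pow_pow_eq (natCast_ne_zero_of_lt h0 hn)
    rw [cubicClass_eq h]
    interval_cases i <;> decide

theorem map_natCast_eq_pow_cubicClass (hχ : χ ^ 3 = 1) {n : ℕ} (hn : (n : ZMod 298615687) ≠ 0) :
    χ n = χ 3 ^ (cubicClass n + 2) := by
  have h3 : (3 : ZMod 298615687) ≠ 0 := by decide
  have hc := map_pow_three_of_ne_zero hχ h3
  obtain ⟨i, hi, h⟩ := exists_three_pow_pow_eq hn
  rw [cubicClass_eq h, map_eq_map_of_pow_eq_pow hχ hn (pow_ne_zero i h3) h.symm, map_pow]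
  interval_cases i
  · exact hc.symm
  · exact (by linear_combination -χ 3 * hc : χ 3 ^ 1 = χ 3 ^ 4)
  · rfl

theorem map_three_ne_one (hχ : orderOf χ = 3) : χ 3 ≠ 1 := by
  refine fun h3 => (ne_one_of_orderOf_eq_three hχ).1 (MulChar.ext fun x => ?_)
  have hχ3 : χ ^ 3 = 1 := hχ ▸ pow_orderOf_eq_one χ
  obtain ⟨i, -, hi⟩ := exists_three_pow_pow_eq x.ne_zero
  rw [MulChar.one_apply_coe,
    ← map_eq_map_of_pow_eq_pow hχ3 (pow_ne_zero i (by decide)) x.ne_zero hi, map_pow, h3, one_pow]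

theorem sum_roundedWeight_cubicClass :
    (∑ n ∈ range 78400 with cubicClass n = 0, roundedWeight n) = 21287095375 ∧
      (∑ n ∈ range 78400 with cubicClass n = 1, roundedWeight n) = 23243657714 ∧
      (∑ n ∈ range 78400 with cubicClass n = 2, roundedWeight n) = 19066481796 := by
  refine sum_filter_eq_of_sum_mul_pow_eq (fun n hn => cubicClass_lt_three (mem_range.mp hn)) ?_
    (by norm_num) (by norm_num) sum_roundedWeight_mul_pow_cubicClass
  calc ∑ n ∈ range 78400, roundedWeight n
      ≤ ∑ _n ∈ range 78400, 78400 ^ 2 := sum_le_sum fun n _ =>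
        (Nat.div_le_self _ _).trans (Nat.pow_le_pow_left (Nat.sub_le _ _) _)
    _ < 2 ^ 64 := by rw [sum_const, card_range]; norm_num

theorem norm_sum_roundedWeight_mul_le (hχ : orderOf χ = 3) :
    ‖∑ n ∈ range 78400, (roundedWeight n : ℂ) * χ n‖ ≤ 0.58895 * 78400 ^ 2 := by
  have hχ3 : χ ^ 3 = 1 := hχ ▸ pow_orderOf_eq_one χ
  have hc : χ 3 ^ 3 = 1 := map_pow_three_of_ne_zero hχ3 (by decide)
  obtain ⟨h0, h1, h2⟩ := sum_roundedWeight_cubicClass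
  have hsum : ∑ n ∈ range 78400, (roundedWeight n : ℂ) * χ n =
      χ 3 ^ 2 * ∑ n ∈ range 78400, (roundedWeight n : ℂ) * χ 3 ^ cubicClass n := by
    rw [mul_sum]
    refine sum_congr rfl fun n hn => ?_
    rcases eq_or_ne n 0 with rfl | hn0
    · simp [roundedWeight]
    · rw [map_natCast_eq_pow_cubicClass hχ3 (natCast_ne_zero_of_lt hn0 (mem_range.mp hn))]
      ring
  rw [hsum, sum_cast_mul_pow_eq fun n hn => cubicClass_lt_three (mem_range.mp hn), norm_mul,
    norm_pow, Complex.norm_eq_one_of_pow_eq_one hc (by norm_num), one_pow, one_mul]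
  simp only [sum_range_succ, sum_range_zero, h0, h1, h2, zero_add, pow_zero, pow_one, mul_one]
  refine le_of_sq_le_sq ?_ (by norm_num)
  have hnorm := norm_add_mul_add_mul_sq_sq hc (map_three_ne_one hχ) 21287095375 23243657714
    19066481796
  push_cast at hnorm ⊢
  rw [hnorm]
  norm_num

theorem norm_sum_smul_sub_sum_roundedWeight_le :
    ‖∑ n ∈ range 78400, ((78400 - n) ^ 2 / n : ℝ) • χ n -
      ∑ n ∈ range 78400, (roundedWeight n : ℂ) * χ n‖ ≤ 78400 := by
  have hterm : ∀ n ∈ range 78400,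
      ‖((78400 - n) ^ 2 / n : ℝ) • χ n - (roundedWeight n : ℂ) * χ n‖ ≤ 1 := by
    intro n hn
    have hfloor : (roundedWeight n : ℝ) = ⌊((78400 - n) ^ 2 / n : ℝ)⌋₊ := by
      have h := Nat.floor_div_eq_div (K := ℝ) ((78400 - n) ^ 2) n
      push_cast [Nat.cast_sub (mem_range.mp hn).le] at h
      rw [h]
      rfl
    rw [Complex.real_smul, ← sub_mul, norm_mul, ← Complex.ofReal_natCast, hfloor,
      ← Complex.ofReal_sub, Complex.norm_real, norm_sub_rev]
    exact mul_le_one₀ (Nat.abs_floor_sub_le (by positivity)) (norm_nonneg _) (χ.norm_le_one _)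
  rw [← sum_sub_distrib]
  simpa using norm_sum_le_of_le _ hterm

theorem norm_LFunction_one_le_of_orderOf_eq_three (hχ : orderOf χ = 3) :
    ‖χ.LFunction 1‖ ≤ 0.81 := by
  have hL := norm_LFunction_one_le (ne_one_of_orderOf_eq_three hχ).1 (even_of_orderOf_eq_three hχ)
    (by norm_num : 0 < 78400)
  push_cast at hL
  have hsum : ‖∑ n ∈ range 78400, ((78400 - n) ^ 2 / n : ℝ) • χ n‖ ≤
      0.58895 * 78400 ^ 2 + 78400 :=
    (norm_le_norm_add_norm_sub' _ _).trans
      (add_le_add (norm_sum_roundedWeight_mul_le hχ) norm_sum_smul_sub_sum_roundedWeight_le)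
  have hsqrt : √(298615687 : ℝ) ≤ 17281 := Real.sqrt_le_left (by norm_num) |>.mpr (by norm_num)
  linarith

end

end NumericalLValue

section ClassNumberBound

open Filter Topology

theorem tendsto_norm_sub_one_mul_riemannZeta :
    Tendsto (fun s : ℝ => ‖((s : ℂ) - 1) * riemannZeta s‖) (𝓝[>] 1) (𝓝 1) := by
  have hofReal : Tendsto (fun s : ℝ => (s : ℂ)) (𝓝[>] 1) (𝓝[≠] 1) :=
    tendsto_nhdsWithin_iff.mpr
      ⟨(Complex.continuous_ofReal.tendsto' 1 1 Complex.ofReal_one).mono_left nhdsWithin_le_nhds, by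
        filter_upwards [self_mem_nhdsWithin] with s hs
        simpa using (Set.mem_Ioi.mp hs).ne'⟩
  simpa using (riemannZeta_residue_one.comp hofReal).norm

variable {K : Type*} [Field K] [NumberField K] {θ : 𝓞 K}

theorem IsSimplestCubicGenerator.dedekindZeta_residue_le {a : ℤ}
    (h : IsSimplestCubicGenerator a θ) {p : ℕ} [Fact p.Prime] (hpa : (p : ℤ) = a ^ 2 + 3 * a + 9)
    {t : ℤ} (ht : a + 1 = 3 * t) {χ : DirichletCharacter ℂ p} (hχ : orderOf χ = 3) :
    dedekindZeta_residue K ≤ (1 - (p : ℝ)⁻¹)⁻¹ ^ 2 * ‖χ.LFunction 1‖ ^ 2 := by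
  have hp1 : (1 : ℝ) < p := by exact_mod_cast (Fact.out : p.Prime).one_lt
  have hfactor : Tendsto (fun s : ℝ => (1 - (p : ℝ) ^ (-s))⁻¹ ^ 2) (𝓝[>] 1)
      (𝓝 ((1 - (p : ℝ)⁻¹)⁻¹ ^ 2)) := by
    have hcont : ContinuousAt (fun s : ℝ => (1 - (p : ℝ) ^ (-s))⁻¹ ^ 2) 1 := by
      have hne : 1 - (p : ℝ) ^ (-1 : ℝ) ≠ 0 := by
        rw [Real.rpow_neg_one]
        exact (sub_pos.mpr (inv_lt_one_of_one_lt₀ hp1)).ne'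
      have hp0 : (p : ℝ) ≠ 0 := (zero_lt_one.trans hp1).ne'
      fun_prop (disch := assumption)
    simpa only [Real.rpow_neg_one] using hcont.tendsto.mono_left nhdsWithin_le_nhds
  have hlim := hfactor.mul (tendsto_norm_sub_one_mul_riemannZeta.mul
    ((tendsto_norm_LSeries_one (ne_one_of_orderOf_eq_three hχ).1).pow 2))
  rw [one_mul] at hlim
  refine (Real.le_norm_self _).trans ?_
  rw [← Complex.norm_real]
  refine le_of_tendsto_of_tendsto (tendsto_sub_one_mul_dedekindZeta_nhdsGT K).norm hlim ?_
  filter_upwards [self_mem_nhdsWithin] with s hs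
  calc ‖((s : ℂ) - 1) * dedekindZeta K s‖
      = ‖(s : ℂ) - 1‖ * ‖dedekindZeta K s‖ := norm_mul _ _
    _ ≤ ‖(s : ℂ) - 1‖ * ((1 - (p : ℝ) ^ (-s))⁻¹ ^ 2 *
          (‖riemannZeta s‖ * ‖LSeries (fun n => χ n) s‖ ^ 2)) := by
        gcongr
        exact h.norm_dedekindZeta_le hpa ht hχ hs
    _ = (1 - (p : ℝ) ^ (-s))⁻¹ ^ 2 *
          (‖((s : ℂ) - 1) * riemannZeta s‖ * ‖LSeries (fun n => χ n) s‖ ^ 2) := by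
        rw [norm_mul]
        ring

theorem exists_dirichletCharacter_orderOf_eq {p n : ℕ} [Fact p.Prime] [NeZero n]
    (hn : n ∣ p - 1) : ∃ χ : DirichletCharacter ℂ p, orderOf χ = n :=
  MulChar.exists_mulChar_orderOf (ZMod p) (by rwa [ZMod.card])
    (Complex.isPrimitiveRoot_exp n (NeZero.ne n))

theorem le_log_17280 : 9.7 ≤ Real.log 17280 := by
  have hexp : Real.exp 97 ≤ 17280 ^ 10 :=
    calc Real.exp 97 = Real.exp 1 ^ 97 := by rw [← Real.exp_nat_mul]; norm_num
      _ ≤ 2.7182818286 ^ 97 := by gcongr; exact Real.exp_one_lt_d9.le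
      _ ≤ 17280 ^ 10 := by norm_num
  have hlog : 97 ≤ Real.log (17280 ^ 10) :=
    (Real.le_log_iff_exp_le (by positivity)).mpr hexp
  rw [Real.log_pow] at hlog
  push_cast at hlog
  linarith

theorem IsSimplestCubicGenerator.classNumber_lt (h : IsSimplestCubicGenerator 17279 θ) :
    classNumber K < 2 ^ 7 * (5 ^ 2 * 13 ^ 2) := by
  have : Fact (Nat.Prime 298615687) := ⟨prime_298615687⟩
  obtain ⟨χ, hχ⟩ := exists_dirichletCharacter_orderOf_eq (p := 298615687) (n := 3) (by norm_num)
  have hregulator : 9.7 ^ 2 ≤ Units.regulator K :=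
    calc (9.7 : ℝ) ^ 2 ≤ Real.log ((17279 : ℤ) + 1) ^ 2 := by
          refine pow_le_pow_left₀ (by norm_num) (le_log_17280.trans_eq ?_) 2
          norm_num
      _ ≤ Units.regulator K := h.sq_log_le_regulator (by norm_num) prime_298615687 (by norm_num)
  have hresidue : 4 * Units.regulator K * classNumber K / (298615687 : ℕ) ≤
      (1 - ((298615687 : ℕ) : ℝ)⁻¹)⁻¹ ^ 2 * 0.81 ^ 2 :=
    calc 4 * Units.regulator K * classNumber K / (298615687 : ℕ)
        = dedekindZeta_residue K :=
          (h.dedekindZeta_residue_eq (by norm_num) prime_298615687 (by norm_num)).symm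
      _ ≤ (1 - ((298615687 : ℕ) : ℝ)⁻¹)⁻¹ ^ 2 * ‖χ.LFunction 1‖ ^ 2 :=
          h.dedekindZeta_residue_le (t := 5760) (by norm_num) (by norm_num) hχ
      _ ≤ (1 - ((298615687 : ℕ) : ℝ)⁻¹)⁻¹ ^ 2 * 0.81 ^ 2 := by
          gcongr
          exact norm_LFunction_one_le_of_orderOf_eq_three hχ
  by_contra! hle
  have hclass : (540800 : ℝ) ≤ classNumber K := by exact_mod_cast hle
  have hmul : 9.7 ^ 2 * 540800 ≤ Units.regulator K * classNumber K := by gcongr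
  norm_num at hresidue hmul
  linarith

end ClassNumberBound

/-- Let `K = ℚ(α)` where `α` is a root of `x³ - 17279x² - 17282x - 1`
(Shanks' cubic with `a = 17279`). Then the `2`-rank of the class group of `K`
is `6`: the subgroup of ideal classes of order dividing `2` has cardinality `2⁶`. -/
theorem shanks_field_class_group_two_rank (K : Type*) [Field K] [NumberField K]
    (α : K) (hα : α ^ 3 - 17279 * α ^ 2 - 17282 * α - 1 = 0)
    (hgen : Algebra.adjoin ℚ {α} = ⊤) :
    Nat.card {c : ClassGroup (NumberField.RingOfIntegers K) // c ^ 2 = 1} = 2 ^ 6 := by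
  obtain ⟨θ, hθ⟩ := exists_isSimplestCubicGenerator (a := 17279)
    (by push_cast; linear_combination hα) hgen
  have hdvd : 5 ^ 2 * 13 ^ 2 ∣ Nat.card (ClassGroup (𝓞 K)) :=
    Nat.Coprime.mul_dvd_of_dvd_of_dvd (by norm_num) (five_sq_dvd_card_classGroup hθ)
      (thirteen_sq_dvd_card_classGroup hθ)
  have hlt : Nat.card (ClassGroup (𝓞 K)) < 2 ^ (6 + 1) * (5 ^ 2 * 13 ^ 2) := by
    rw [Nat.card_eq_fintype_card]
    exact hθ.classNumber_lt
  exact natCard_two_torsion_eq_two_pow (two_pow_six_dvd_card_ker hθ) hdvd (by decide) hlt
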